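/- arXiv:1612.08100 — 2 statements merged into one kernel-verified Lean document; each statement's English description precedes it below -/
import Mathlib

section
/- Let U be an N × N random unitary matrix distributed according to Haar measure on U(N). Then for every x > 0, P[ max_{1 ≤ k ≤ N} |𝒩_{2πk/N} − k| > x ] ≤ 2N · exp(−min{x²/(4 log(eN)), x/2}). -/
open MeasureTheory Real Filter

noncomputable section

/-- The Borel σ-algebra on the unitary group `U(N)`. -/
instance (N : ℕ) : MeasurableSpace (Matrix.unitaryGroup (Fin N) ℂ) := borel _

instance (N : ℕ) : BorelSpace (Matrix.unitaryGroup (Fin N) ℂ) := ⟨rfl⟩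

/-- The eigenvalue angles (in `[0, 2π)`, with multiplicity) of a unitary matrix `U`:
the arguments of the roots of the characteristic polynomial, shifted to lie in `[0, 2π)`. -/
def eigenAngles (N : ℕ) (U : Matrix.unitaryGroup (Fin N) ℂ) : Multiset ℝ :=
  ((U : Matrix (Fin N) (Fin N) ℂ).charpoly.roots).map
    (fun z => if 0 ≤ Complex.arg z then Complex.arg z else Complex.arg z + 2 * π)

open Classical in
/-- `𝒩_A`: the number of eigenvalue angles of `U` lying in the set `A`. -/
def countAngles (N : ℕ) (U : Matrix.unitaryGroup (Fin N) ℂ) (A : Set ℝ) : ℕ :=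
  Multiset.card ((eigenAngles N U).filter (· ∈ A))

/-- `𝒩_θ`: the number of eigenvalue angles of `U` in `[0, θ]`. -/
def countFun (N : ℕ) (U : Matrix.unitaryGroup (Fin N) ℂ) (θ : ℝ) : ℕ :=
  countAngles N U (Set.Icc 0 θ)

/-- The Kolmogorov distance between the empirical spectral measure of `U` and the
uniform measure on the circle: `sup_{0 ≤ θ < 2π} |𝒩_θ/N - θ/(2π)|`. -/
def dK (N : ℕ) (U : Matrix.unitaryGroup (Fin N) ℂ) : ℝ :=
  ⨆ θ : Set.Ico (0:ℝ) (2 * π), |(countFun N U θ : ℝ) / N - (θ : ℝ) / (2 * π)|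

/-- `max_{1 ≤ k ≤ N} |𝒩_{2πk/N} - k|`. -/
def maxDev (N : ℕ) (U : Matrix.unitaryGroup (Fin N) ℂ) : ℝ :=
  ⨆ k : (Finset.Icc 1 N : Finset ℕ), |(countFun N U (2 * π * (k : ℕ) / N) : ℝ) - ((k : ℕ) : ℝ)|

end

/-!
Heine's identity expresses the expectation of a multiplicative statistic of the eigenvalues of a
Haar unitary matrix as a Toeplitz determinant. For the indicator of an arc it gives
`E exp (#eigenvalues in the arc) = det (1 + (e - 1) K)`, where `K` is the Toeplitz matrix of the
indicator. The spectrum of `K` lies in `[0, 1]`, so the determinant is the exponential moment of a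
sum of independent Bernoulli variables with mean `tr K` and variance `tr K - tr K²`. The variance is
at most `(1 + log N) / 2` because the Fourier coefficients of an arc decay like `1 / n`. Hence the
count exceeds its mean by `x` with probability at most `exp ((1 + log N) / 2 - x)`. Applying this to
the arcs `[0, 2πk/N]` and to their complements and summing over `k` gives the bound when
`1 + log N ≤ x`; for smaller `x` the right-hand side is at least `1`.

Heine's identity is proved without Weyl's integration formula. Applying `f` to the companion matrix
of the characteristic polynomial of `U` writes `det f(U)` as a determinant in the traces of the
symmetric powers of `U`. Left translation by diagonal matrices, together with the Zariski density of
the unitary group in all matrices, shows that `∏ᵢ tr (Sym^{kᵢ} U)` is orthogonal to `det U ^ m`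
unless every `kᵢ` is `m`.
-/

noncomputable section

namespace HaarUnitary

section SymmetricPower

open MvPolynomial Matrix

variable {n R : Type*} [Fintype n] [DecidableEq n] [CommRing R]

/-- The exponents of the monomials of total degree `k` in variables indexed by `n`. -/
abbrev Exponent (n : Type*) [Fintype n] [DecidableEq n] (k : ℕ) : Type _ :=
  ↥(Finset.univ.finsuppAntidiag k : Finset (n →₀ ℕ))

lemma Exponent.sum_eq {k : ℕ} (κ : Exponent n k) : ∑ a, κ.1 a = k :=
  (Finset.mem_finsuppAntidiag.1 κ.2).1

lemma sum_monomial_coeff_of_isHomogeneous {k : ℕ} {p : MvPolynomial n R}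
    (hp : p.IsHomogeneous k) : ∑ μ : Exponent n k, monomial μ.1 (coeff μ.1 p) = p := by
  ext ν
  rw [Finset.sum_coe_sort _ fun μ => monomial μ (coeff μ p), coeff_sum]
  simp only [coeff_monomial, Finset.sum_ite_eq']
  refine ite_eq_left_iff.2 fun hν => (by_contra fun hne => hν ?_)
  have hdeg : ν.degree = k := by
    rw [Finsupp.degree_eq_weight_one]
    exact hp (Ne.symm hne)
  rw [Finset.mem_finsuppAntidiag, ← hdeg, Finsupp.degree_eq_sum]
  exact ⟨rfl, Finset.subset_univ _⟩

/-- The `k`-th symmetric power of a matrix, in the monomial basis of the homogeneous polynomials of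
degree `k`: the matrix of the substitution `x ↦ x A`, with `x` a row vector. -/
def symPow (k : ℕ) (A : Matrix n n R) : Matrix (Exponent n k) (Exponent n k) R :=
  of fun μ κ => coeff μ.1 (∏ a, Aᵀ.toMvPolynomial a ^ κ.1 a)

lemma symPow_apply {k : ℕ} (A : Matrix n n R) (μ κ : Exponent n k) :
    symPow k A μ κ = coeff μ.1 (∏ a, Aᵀ.toMvPolynomial a ^ κ.1 a) :=
  rfl

lemma prod_toMvPolynomial_pow {k : ℕ} (A : Matrix n n R) (κ : Exponent n k) :
    ∏ a, Aᵀ.toMvPolynomial a ^ κ.1 a = ∑ μ : Exponent n k, monomial μ.1 (symPow k A μ κ) := by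
  have h : (∏ a, Aᵀ.toMvPolynomial a ^ κ.1 a).IsHomogeneous (∑ a, κ.1 a) :=
    IsHomogeneous.prod _ _ _ fun a _ => by
      simpa only [one_mul] using (Aᵀ.toMvPolynomial_isHomogeneous a).pow (κ.1 a)
  exact (sum_monomial_coeff_of_isHomogeneous (by simpa only [κ.sum_eq] using h)).symm

lemma prod_vecMul_pow {k : ℕ} (A : Matrix n n R) (κ : Exponent n k) (v : n → R) :
    ∏ a, (v ᵥ* A) a ^ κ.1 a = ∑ μ : Exponent n k, symPow k A μ κ * ∏ a, v a ^ μ.1 a := by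
  have h := congrArg (eval v) (prod_toMvPolynomial_pow A κ)
  simpa only [map_prod, map_pow, map_sum, toMvPolynomial_eval_eq_apply, mulVec_transpose,
    eval_monomial, Finsupp.prod_fintype _ _ fun _ => pow_zero _] using h

lemma symPow_mul (k : ℕ) (A B : Matrix n n R) :
    symPow k (A * B) = symPow k A * symPow k B := by
  ext ν κ
  have h : ∏ a, (A * B)ᵀ.toMvPolynomial a ^ κ.1 a =
      ∑ μ : Exponent n k, C (symPow k B μ κ) * ∏ a, Aᵀ.toMvPolynomial a ^ μ.1 a := by
    simp only [transpose_mul, toMvPolynomial_mul, ← map_pow, ← map_prod,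
      prod_toMvPolynomial_pow B κ, map_sum, bind₁_monomial]
    refine Finset.sum_congr rfl fun μ _ => ?_
    exact congrArg _ (Finset.prod_subset (Finset.subset_univ _) fun a _ ha => by
      rw [Finsupp.notMem_support_iff.1 ha, pow_zero])
  rw [symPow_apply, h, coeff_sum, mul_apply]
  refine Finset.sum_congr rfl fun μ _ => ?_
  rw [coeff_C_mul, mul_comm, symPow_apply A]

lemma trace_symPow_conj (k : ℕ) {P Q : Matrix n n R} (h : Q * P = 1) (A : Matrix n n R) :
    (symPow k (P * A * Q)).trace = (symPow k A).trace := by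
  rw [mul_assoc, symPow_mul, trace_mul_comm, ← symPow_mul, mul_assoc, h, mul_one]

lemma toMvPolynomial_diagonal (z : n → R) (a : n) :
    (diagonal z).toMvPolynomial a = C (z a) * X a := by
  rw [toMvPolynomial, Finset.sum_eq_single a fun b _ hb => by
    rw [diagonal_apply_ne _ hb.symm, monomial_zero]]
  · rw [diagonal_apply_eq, C_mul_X_eq_monomial]
  · exact fun h => absurd (Finset.mem_univ a) h

lemma trace_symPow_diagonal (k : ℕ) (z : n → R) :
    (symPow k (diagonal z)).trace =
      ∑ κ ∈ Finset.univ.finsuppAntidiag k, ∏ a, z a ^ (κ : n →₀ ℕ) a := by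
  rw [trace, ← Finset.sum_coe_sort _ fun κ : n →₀ ℕ => ∏ a, z a ^ κ a]
  refine Finset.sum_congr rfl fun κ _ => ?_
  have h : ∏ a, (C (z a) * X a) ^ κ.1 a = monomial κ.1 (∏ a, z a ^ κ.1 a) := by
    rw [monomial_eq, Finsupp.prod_fintype _ _ fun _ => pow_zero _, map_prod,
      ← Finset.prod_mul_distrib]
    simp only [mul_pow, map_pow]
  simp only [diag_apply, symPow_apply, diagonal_transpose, toMvPolynomial_diagonal, h,
    coeff_monomial, if_true]

open scoped MvPowerSeries.WithPiTopology in
lemma continuous_symPow [TopologicalSpace R] [IsTopologicalRing R] (k : ℕ) :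
    Continuous (symPow k : Matrix n n R → Matrix (Exponent n k) (Exponent n k) R) := by
  have hlin (a : n) : Continuous fun A : Matrix n n R =>
      (Aᵀ.toMvPolynomial a : MvPowerSeries n R) := by
    refine continuous_pi fun ν => ?_
    change Continuous fun A : Matrix n n R => coeff ν (∑ b, monomial (.single b 1) (A b a))
    simp only [coeff_sum, coeff_monomial]
    exact continuous_finsetSum _ fun b _ => by split_ifs <;> fun_prop
  refine continuous_matrix fun μ κ => ?_
  have hprod := continuous_finsetProd Finset.univ fun a _ => (hlin a).pow (κ.1 a)
  refine ((MvPowerSeries.WithPiTopology.continuous_coeff R μ.1).comp hprod).congr fun A => ?_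
  rw [symPow_apply, ← coeff_coe, ← coeToMvPowerSeries.ringHom_apply, map_prod]
  simp only [map_pow, coeToMvPowerSeries.ringHom_apply, Function.comp_apply, Pi.pow_apply]

end SymmetricPower

section Diagonalization

open Matrix Module
open scoped ComplexOrder

variable {n K V : Type*} [Fintype n]

lemma exists_basis_apply_eq_smul [Field K] [AddCommGroup V] [Module K V] [FiniteDimensional K V]
    (f : End K V) (hf : ⨆ μ, f.eigenspace μ = ⊤) (hn : finrank K V = Fintype.card n) :
    ∃ (b : Basis n K V) (z : n → K), ∀ i, f (b i) = z i • b i := by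
  classical
  have hint := DirectSum.isInternal_submodule_of_iSupIndep_of_iSup_eq_top f.eigenspaces_iSupIndep hf
  let b := hint.collectedBasis fun μ => finBasis K (f.eigenspace μ)
  have := FiniteDimensional.fintypeBasisIndex b
  let e := Fintype.equivOfCardEq ((finrank_eq_card_basis b).symm.trans hn)
  refine ⟨b.reindex e, fun i => (e.symm i).1, fun i => ?_⟩
  rw [Basis.reindex_apply]
  exact End.mem_eigenspace_iff.1 (hint.collectedBasis_mem _ (e.symm i))

variable [DecidableEq n]

lemma exists_eq_mul_diagonal_mul [Field K] (A : Matrix n n K)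
    (hA : ⨆ μ, End.eigenspace (toLin' A) μ = ⊤) :
    ∃ (P Q : Matrix n n K) (z : n → K), Q * P = 1 ∧ A = P * diagonal z * Q := by
  obtain ⟨b, z, hb⟩ := exists_basis_apply_eq_smul (n := n) _ hA (by simp)
  let e := Pi.basisFun K n
  have hdiag : LinearMap.toMatrix b b (toLin' A) = diagonal z := by
    ext i j
    rw [LinearMap.toMatrix_apply, hb, map_smul, b.repr_self, Finsupp.smul_single, smul_eq_mul,
      mul_one, diagonal_apply, Finsupp.single_apply]
    grind
  refine ⟨e.toMatrix b, b.toMatrix e, z, b.toMatrix_mul_toMatrix_flip e, ?_⟩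
  rw [← hdiag, basis_toMatrix_mul_linearMap_toMatrix_mul_basis_toMatrix,
    LinearMap.toMatrix_eq_toMatrix', LinearMap.toMatrix'_toLin']

variable [RCLike K] {A : Matrix n n K}

omit [DecidableEq n] in
lemma mulVec_eq_zero_of_mulVec_mulVec_eq_zero (hA : Commute Aᴴ A) {v : n → K}
    (h : A *ᵥ (A *ᵥ v) = 0) : A *ᵥ v = 0 := by
  rw [← conjTranspose_mul_self_mulVec_eq_zero, ← mulVec_mulVec,
    ← self_mul_conjTranspose_mulVec_eq_zero, ← hA.eq, ← mulVec_mulVec, h, mulVec_zero]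

lemma maxGenEigenspace_toLin'_of_commute (hA : Commute Aᴴ A) (μ : K) :
    End.maxGenEigenspace (toLin' A) μ = End.eigenspace (toLin' A) μ := by
  have hlin : toLin' A - μ • 1 = toLin' (A - μ • 1) := by
    rw [map_sub, map_smul, toLin'_one, Module.End.one_eq_id]
  have hB : Commute (A - μ • 1)ᴴ (A - μ • 1) := by
    rw [conjTranspose_sub, conjTranspose_smul, conjTranspose_one]
    exact (hA.sub_right ((Commute.one_right _).smul_right _)).sub_left
      ((Commute.one_left _).smul_left _)
  have hker : LinearMap.ker ((toLin' A - μ • 1) ^ 1) = LinearMap.ker ((toLin' A - μ • 1) ^ 2) := by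
    rw [pow_one, sq, hlin]
    refine le_antisymm (LinearMap.ker_le_ker_comp _ _) fun v hv => ?_
    exact mulVec_eq_zero_of_mulVec_mulVec_eq_zero hB hv
  refine le_antisymm (fun v hv => ?_) End.eigenspace_le_maxGenEigenspace
  obtain ⟨k, hk⟩ := (End.mem_maxGenEigenspace _ _ _).1 hv
  rw [End.eigenspace_def, ← pow_one (toLin' A - μ • 1), End.ker_pow_constant hker k,
    LinearMap.mem_ker, pow_add, Module.End.mul_apply, hk, map_zero]

lemma exists_eq_mul_diagonal_mul_of_commute {A : Matrix n n ℂ} (hA : Commute Aᴴ A) :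
    ∃ (P Q : Matrix n n ℂ) (z : n → ℂ), Q * P = 1 ∧ A = P * diagonal z * Q :=
  exists_eq_mul_diagonal_mul A <| by
    simpa only [maxGenEigenspace_toLin'_of_commute hA] using
      End.iSup_maxGenEigenspace_eq_top (toLin' A)

end Diagonalization

section DeterminantIdentity

open Matrix Polynomial

variable {n R K : Type*} [Fintype n] [DecidableEq n] [CommRing R]

/-- The generating series `∑ₖ tr(Symᵏ A) Xᵏ` of the complete homogeneous symmetric functions of the
eigenvalues of `A`. -/
def symSeries (A : Matrix n n R) : PowerSeries R :=
  PowerSeries.mk fun k => (symPow k A).trace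

lemma symSeries_conj {P Q : Matrix n n R} (h : Q * P = 1) (A : Matrix n n R) :
    symSeries (P * A * Q) = symSeries A :=
  congrArg PowerSeries.mk (funext fun k => trace_symPow_conj k h A)

lemma symSeries_diagonal (z : n → R) :
    symSeries (diagonal z) = ∏ a, PowerSeries.mk fun k => z a ^ k := by
  ext k
  simp only [symSeries, PowerSeries.coeff_mk, trace_symPow_diagonal, PowerSeries.coeff_prod]

lemma charpolyRev_mul_symSeries_diagonal (z : n → R) :
    ((diagonal z).charpolyRev : PowerSeries R) * symSeries (diagonal z) = 1 := by
  have hdet : (diagonal z).charpolyRev = ∏ a, (1 - C (z a) * X) := by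
    rw [charpolyRev, diagonal_map (map_zero _), ← diagonal_one, ← diagonal_smul, diagonal_sub,
      det_diagonal]
    simp only [Pi.smul_apply, smul_eq_mul, mul_comm X]
  rw [hdet, symSeries_diagonal, ← coeToPowerSeries.ringHom_apply, map_prod,
    ← Finset.prod_mul_distrib]
  refine Finset.prod_eq_one fun a _ => ?_
  have h := congrArg (PowerSeries.rescale (z a)) (PowerSeries.mk_one_mul_one_sub_eq_one R)
  rw [map_mul, PowerSeries.rescale_mk, map_sub, map_one, PowerSeries.rescale_X, mul_comm] at h
  simpa using h

/-- MacMahon's master theorem. -/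
lemma charpolyRev_mul_symSeries {A : Matrix n n ℂ} (hA : Commute Aᴴ A) :
    (A.charpolyRev : PowerSeries ℂ) * symSeries A = 1 := by
  obtain ⟨P, Q, z, hQP, rfl⟩ := exists_eq_mul_diagonal_mul_of_commute hA
  have hchar : (P * diagonal z * Q).charpoly = (diagonal z).charpoly := by
    rw [charpoly_mul_comm, ← mul_assoc, hQP, one_mul]
  rw [← reverse_charpoly, hchar, reverse_charpoly, symSeries_conj hQP,
    charpolyRev_mul_symSeries_diagonal]

lemma constantCoeff_symSeries {A : Matrix n n ℂ} (hA : Commute Aᴴ A) :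
    (symSeries A).constantCoeff = 1 := by
  have h := congrArg PowerSeries.constantCoeff (charpolyRev_mul_symSeries hA)
  rwa [map_mul, map_one, ← PowerSeries.coeff_zero_eq_constantCoeff_apply, coeff_coe,
    coeff_zero_eq_eval_zero, eval_charpolyRev, one_mul] at h

lemma sum_coeff_mul_coeff_add (q : R[X]) (G : PowerSeries R) (b : ℕ) :
    ∑ l ∈ Finset.range (q.natDegree + 1), q.coeff l * PowerSeries.coeff (b + l) G =
      PowerSeries.coeff (b + q.natDegree) ((q.reverse : PowerSeries R) * G) := by
  rw [PowerSeries.coeff_mul, Finset.Nat.sum_antidiagonal_eq_sum_range_succ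
    (fun i j => PowerSeries.coeff i (q.reverse : PowerSeries R) * PowerSeries.coeff j G),
    ← Finset.sum_range_reflect]
  refine Finset.sum_subset_zero_on_sdiff (Finset.range_mono (by omega)) (fun i hi => ?_)
    fun i hi => ?_
  · have hi' : q.natDegree < i := by grind
    rw [coeff_coe, coeff_eq_zero_of_natDegree_lt (q.reverse_natDegree_le.trans_lt hi'), zero_mul]
  · have hi' : i ≤ q.natDegree := Nat.lt_succ_iff.1 (Finset.mem_range.1 hi)
    rw [coeff_coe, coeff_reverse, revAt_le hi']
    congr 2
    rw [Nat.add_sub_cancel, Nat.add_sub_assoc hi']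

/-- The companion matrix of a monic polynomial `q` of degree `N`. -/
def companion (N : ℕ) (q : R[X]) : Matrix (Fin N) (Fin N) R :=
  of fun i j => if (i : ℕ) + 1 = N then -q.coeff j else if (j : ℕ) = i + 1 then 1 else 0

lemma charpoly_companion [Field K] {N : ℕ} {q : K[X]} (hq : q.Monic) (hN : q.natDegree = N) :
    (companion N q).charpoly = q := by
  subst hN
  have h := charpoly_leftMulMatrix (AdjoinRoot.powerBasis hq.ne_zero)
  rw [PowerBasis.leftMulMatrix, PowerBasis.minpolyGen_eq,
    AdjoinRoot.minpoly_powerBasis_gen_of_monic hq] at h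
  rw [← charpoly_transpose]
  exact h

/-- `jacobiTrudi N H b` is the Toeplitz matrix `(h_{b+i-j})` of the coefficients `h` of `H`, with
`h_k = 0` for `k < 0`. -/
def jacobiTrudi (N : ℕ) (H : PowerSeries R) (b : ℕ) : Matrix (Fin N) (Fin N) R :=
  of fun i j => PowerSeries.coeff (b + i) (PowerSeries.X ^ (j : ℕ) * H)

lemma jacobiTrudi_succ {N : ℕ} {q : R[X]} (hq : q.Monic) (hN : q.natDegree = N)
    {H : PowerSeries R} (hH : (q.reverse : PowerSeries R) * H = 1) (b : ℕ) :
    jacobiTrudi N H (b + 1) = companion N q * jacobiTrudi N H b := by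
  have hlead : q.coeff N = 1 := hN ▸ hq.coeff_natDegree
  ext i j
  simp only [mul_apply, jacobiTrudi, companion, of_apply]
  by_cases hi : (i : ℕ) + 1 = N
  · have h := sum_coeff_mul_coeff_add q (PowerSeries.X ^ (j : ℕ) * H) b
    rw [mul_left_comm, hH, mul_one, PowerSeries.coeff_X_pow, if_neg (by omega), hN,
      Finset.sum_range_succ, hlead, one_mul, Finset.sum_range] at h
    simp only [hi, if_true, neg_mul, Finset.sum_neg_distrib]
    rw [add_assoc, add_comm 1, hi]
    exact eq_neg_of_add_eq_zero_right h
  · have hlt : (i : ℕ) + 1 < N := by omega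
    simp only [hi, if_false]
    rw [Finset.sum_eq_single ⟨i + 1, hlt⟩ (fun l _ hl => ?_) (by simp), if_pos rfl, one_mul]
    · congr 2
      simp only
      omega
    · rw [if_neg fun h => hl (Fin.ext h), zero_mul]

lemma det_jacobiTrudi_zero (N : ℕ) (H : PowerSeries R) (hH : H.constantCoeff = 1) :
    (jacobiTrudi N H 0).det = 1 := by
  rw [det_of_isLowerTriangular _ fun i j hij => ?_]
  · refine Finset.prod_eq_one fun i _ => ?_
    rw [jacobiTrudi, of_apply, zero_add, PowerSeries.coeff_X_pow_mul', if_pos le_rfl,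
      Nat.sub_self, PowerSeries.coeff_zero_eq_constantCoeff_apply, hH]
  · have hlt : (i : ℕ) < j := hij
    rw [jacobiTrudi, of_apply, PowerSeries.coeff_X_pow_mul', if_neg (by omega)]

lemma sum_smul_jacobiTrudi {N : ℕ} {q : R[X]} (hq : q.Monic) (hN : q.natDegree = N)
    {H : PowerSeries R} (hH : (q.reverse : PowerSeries R) * H = 1) (f : R[X]) :
    ∑ b ∈ f.support, f.coeff b • jacobiTrudi N H b =
      aeval (companion N q) f * jacobiTrudi N H 0 := by
  have hpow (b : ℕ) : jacobiTrudi N H b = companion N q ^ b * jacobiTrudi N H 0 := by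
    induction b with
    | zero => rw [pow_zero, one_mul]
    | succ b ih => rw [jacobiTrudi_succ hq hN hH, ih, pow_succ', mul_assoc]
  rw [aeval_def, eval₂_eq_sum, Polynomial.sum, Finset.sum_mul]
  exact Finset.sum_congr rfl fun b _ => by rw [hpow, Algebra.smul_def, mul_assoc]

lemma det_aeval [Field K] [IsAlgClosed K] (A : Matrix n n K) (f : K[X]) :
    (aeval A f).det = (A.charpoly.roots.map fun z => f.eval z).prod := by
  have hsplit := IsAlgClosed.splits A.charpoly
  have hcard : A.charpoly.roots.card = Fintype.card n := by
    rw [← hsplit.natDegree_eq_card_roots, A.charpoly_natDegree_eq_dim]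
  let φ : K[X] →* K :=
    detMonoidHom.comp ((aeval A : K[X] →ₐ[K] Matrix n n K) : K[X] →* Matrix n n K)
  have hC (c : K) : φ (C c) = c ^ A.charpoly.roots.card := by
    change (aeval A (C c)).det = _
    rw [aeval_C, algebraMap_eq_diagonal, det_diagonal, hcard]
    exact Finset.prod_const c
  have hX (s : K) : φ (X - C s) = (A.charpoly.roots.map fun z => z - s).prod := by
    change (aeval A (X - C s)).det = _
    have hneg : aeval A (X - C s) = -(scalar n s - A) := by
      rw [map_sub, aeval_X, aeval_C, neg_sub]
      rfl
    rw [hneg, det_neg, ← hcard, ← eval_charpoly,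
      hsplit.eval_eq_prod_roots_of_monic A.charpoly_monic, ← Multiset.prod_replicate,
      ← Multiset.map_const', ← Multiset.prod_map_mul]
    simp only [neg_one_mul, neg_sub]
  change φ f = _
  simp only [(IsAlgClosed.splits f).eval_eq_prod_roots]
  rw [Multiset.prod_map_mul, Multiset.map_const', Multiset.prod_replicate, ← hC,
    Multiset.prod_map_prod_map]
  conv_lhs => rw [(IsAlgClosed.splits f).eq_prod_roots, map_mul, map_multiset_prod,
    Multiset.map_map]
  simp only [Function.comp_apply, hX]

lemma det_aeval_eq_det_sum_jacobiTrudi {N : ℕ} {A : Matrix (Fin N) (Fin N) ℂ}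
    (hA : Commute Aᴴ A) (f : ℂ[X]) :
    (aeval A f).det = (∑ b ∈ f.support, f.coeff b • jacobiTrudi N (symSeries A) b).det := by
  have hN : A.charpoly.natDegree = N := by rw [charpoly_natDegree_eq_dim, Fintype.card_fin]
  have hH : (A.charpoly.reverse : PowerSeries ℂ) * symSeries A = 1 := by
    rw [reverse_charpoly, charpolyRev_mul_symSeries hA]
  rw [sum_smul_jacobiTrudi A.charpoly_monic hN hH, det_mul,
    det_jacobiTrudi_zero _ _ (constantCoeff_symSeries hA), mul_one, det_aeval, det_aeval,
    charpoly_companion A.charpoly_monic hN]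

end DeterminantIdentity

section ZariskiDensity

open Matrix MvPolynomial
open scoped ComplexStarModule

variable {n : Type*} [Fintype n] [DecidableEq n]

lemma infinite_unit_sphere : (Metric.sphere (0 : ℂ) 1).Infinite :=
  (isPreconnected_sphere (by rw [Complex.rank_real_complex]; norm_num) 0 1).infinite_of_nontrivial
    ⟨1, by simp, -1, by simp, by norm_num⟩

lemma diagonal_mem_unitaryGroup {d : n → ℂ} (hd : ∀ i, d i ∈ Metric.sphere (0 : ℂ) 1) :
    diagonal d ∈ unitaryGroup n ℂ := by
  rw [mem_unitaryGroup_iff, star_eq_conjTranspose, diagonal_conjTranspose, diagonal_mul_diagonal,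
    ← diagonal_one]
  congr 1
  funext i
  rw [Pi.star_apply, RCLike.star_def, Complex.mul_conj, Complex.normSq_eq_norm_sq,
    mem_sphere_zero_iff_norm.1 (hd i), one_pow, Complex.ofReal_one]

lemma aeval_isHermitian_eq_zero {p : MvPolynomial (n × n) ℂ}
    (hp : ∀ U ∈ unitaryGroup n ℂ, aeval (fun ij => U ij.1 ij.2) p = 0)
    {A : Matrix n n ℂ} (hA : A.IsHermitian) : aeval (fun ij => A ij.1 ij.2) p = 0 := by
  set Q := hA.eigenvectorUnitary
  let r : MvPolynomial n ℂ := aeval (fun ij => ∑ a, C (Q.1 ij.1 a * star Q.1 a ij.2) * X a) p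
  have hr (d : n → ℂ) :
      aeval d r = aeval (fun ij => (Q.1 * diagonal d * star Q.1) ij.1 ij.2) p := by
    rw [comp_aeval_apply]
    congr 2 with ij
    simp only [map_sum, map_mul, aeval_X, ← algebraMap_eq, AlgHom.commutes,
      Algebra.algebraMap_self, RingHom.id_apply]
    rw [mul_apply]
    simp only [mul_diagonal]
    exact Finset.sum_congr rfl fun a _ => by ring
  have hr0 : r = 0 := funext_set _ (fun _ => infinite_unit_sphere) fun d hd => by
    rw [map_zero, ← aeval_eq_eval]
    refine (hr d).trans (hp _ (mul_mem (mul_mem Q.2 (diagonal_mem_unitaryGroup ?_)) (star Q).2))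
    exact fun i => hd i trivial
  rw [hA.spectral_theorem]
  exact (hr _).symm.trans (by rw [hr0, map_zero])

/-- Every matrix is the value at `t = i` of a line of matrices which are Hermitian for `t` real. -/
lemma eq_zero_of_aeval_unitary_eq_zero {p : MvPolynomial (n × n) ℂ}
    (hp : ∀ U ∈ unitaryGroup n ℂ, aeval (fun ij => U ij.1 ij.2) p = 0) : p = 0 := by
  refine MvPolynomial.funext fun v => ?_
  let A : Matrix n n ℂ := of fun i j => v (i, j)
  let r : Polynomial ℂ := aeval (fun ij => Polynomial.C ((ℜ A : Matrix n n ℂ) ij.1 ij.2) +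
    Polynomial.X * Polynomial.C ((ℑ A : Matrix n n ℂ) ij.1 ij.2)) p
  have hr (t : ℂ) : r.eval t =
      aeval (fun ij => ((ℜ A : Matrix n n ℂ) + t • (ℑ A : Matrix n n ℂ)) ij.1 ij.2) p := by
    rw [← Polynomial.coe_aeval_eq_eval, comp_aeval_apply]
    simp [mul_comm t]
  have hr0 : r = 0 := by
    refine r.eq_zero_of_infinite_isRoot <|
      (Set.infinite_range_of_injective Complex.ofReal_injective).mono ?_
    rintro _ ⟨t, rfl⟩
    refine (hr t).trans (aeval_isHermitian_eq_zero hp ?_)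
    exact (ℜ A).2.add (IsSelfAdjoint.smul (Complex.conj_ofReal t) (ℑ A).2)
  have h := hr Complex.I
  rw [hr0, Polynomial.eval_zero, realPart_add_I_smul_imaginaryPart] at h
  rw [map_zero, ← aeval_eq_eval]
  exact h.symm

lemma eq_zero_of_sum_mul_prod_unitary_eq_zero {k : n → ℕ} {r : (∀ i, Exponent n (k i)) → ℂ}
    (hr : ∀ U ∈ unitaryGroup n ℂ, ∑ μ, r μ * ∏ i, ∏ a, U i a ^ (μ i).1 a = 0) : r = 0 := by
  let e (μ : ∀ i, Exponent n (k i)) : n × n →₀ ℕ :=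
    Finsupp.equivFunOnFinite.symm fun ia => (μ ia.1).1 ia.2
  have he : Function.Injective e := fun μ ν h =>
    funext fun i => Subtype.ext (Finsupp.ext fun a => DFunLike.congr_fun h (i, a))
  have hzero : ∑ μ, monomial (e μ) (r μ) = 0 := eq_zero_of_aeval_unitary_eq_zero fun U hU => by
    rw [map_sum, ← hr U hU]
    refine Finset.sum_congr rfl fun μ _ => ?_
    rw [aeval_monomial, Finsupp.prod_fintype _ _ fun _ => pow_zero _, Fintype.prod_prod_type]
    rfl
  funext μ
  have h := congrArg (coeff (e μ)) hzero
  simpa only [coeff_sum, coeff_monomial, he.eq_iff, Finset.sum_ite_eq', Finset.mem_univ, if_true,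
    coeff_zero, Pi.zero_apply] using h

end ZariskiDensity

section Orthogonality

open Matrix

instance {n : Type*} [Fintype n] [DecidableEq n] : CompactSpace (unitaryGroup n ℂ) := by
  refine isCompact_iff_compactSpace.1 <| IsCompact.of_isClosed_subset
    (isCompact_univ_pi fun _ : n => isCompact_univ_pi fun _ : n => isCompact_closedBall (0 : ℂ) 1)
    ?_ fun U hU i _ j _ => mem_closedBall_zero_iff.2 (entry_norm_bound_of_unitary hU i j)
  have h : (unitaryGroup n ℂ : Set (Matrix n n ℂ)) = {A | A * star A = 1} :=
    Set.ext fun A => mem_unitaryGroup_iff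
  rw [h]
  exact isClosed_eq (by fun_prop) continuous_const

lemma integrable_of_continuous {X E : Type*} [TopologicalSpace X] [CompactSpace X]
    [MeasurableSpace X] [OpensMeasurableSpace X] {μ : Measure X} [IsFiniteMeasureOnCompacts μ]
    [NormedAddCommGroup E] {F : X → E} (hF : Continuous F) : Integrable F μ :=
  hF.integrable_of_hasCompactSupport (.of_compactSpace F)

variable {N : ℕ} {ℙ : Measure (unitaryGroup (Fin N) ℂ)}

lemma integral_mul_left_mul_star_det_pow [ℙ.IsMulLeftInvariant]
    (F : Matrix (Fin N) (Fin N) ℂ → ℂ) (m : ℕ) (g : unitaryGroup (Fin N) ℂ) :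
    ∫ U : unitaryGroup (Fin N) ℂ, F (g.1 * U.1) * star U.1.det ^ m ∂ℙ =
      g.1.det ^ m * ∫ U : unitaryGroup (Fin N) ℂ, F U.1 * star U.1.det ^ m ∂ℙ := by
  have hg : g.1.det * star g.1.det = 1 := by
    rw [← det_conjTranspose, ← det_mul, ← star_eq_conjTranspose, mem_unitaryGroup_iff.1 g.2,
      det_one]
  rw [← integral_mul_left_eq_self (fun U : unitaryGroup (Fin N) ℂ => F U.1 * star U.1.det ^ m) g,
    ← integral_const_mul]
  refine integral_congr_ae (.of_forall fun U => ?_)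
  simp only [UnitaryGroup.mul_val, det_mul, star_mul', mul_pow]
  have hm := congrArg (· ^ m) hg
  simp only [mul_pow, one_pow] at hm
  linear_combination (-F (g.1 * U.1) * star U.1.det ^ m) * hm

lemma exists_mem_sphere_pow_ne_pow {k m : ℕ} (h : k ≠ m) :
    ∃ ζ ∈ Metric.sphere (0 : ℂ) 1, ζ ^ k ≠ ζ ^ m := by
  by_contra! hζ
  have hzero := Polynomial.eq_zero_of_infinite_isRoot
    (Polynomial.X ^ k - Polynomial.X ^ m : Polynomial ℂ)
    (infinite_unit_sphere.mono fun ζ h => by simp [hζ ζ h])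
  exact h (by simpa using congrArg Polynomial.natDegree (sub_eq_zero.1 hzero))

lemma integral_prod_pow_mul_star_det_pow_eq_zero [ℙ.IsMulLeftInvariant] {m : ℕ} {k : Fin N → ℕ}
    (κ : ∀ i, Exponent (Fin N) (k i)) {i₀ : Fin N} (hi₀ : k i₀ ≠ m) :
    ∫ U : unitaryGroup (Fin N) ℂ, (∏ i, ∏ a, U.1 i a ^ (κ i).1 a) * star U.1.det ^ m ∂ℙ = 0 := by
  obtain ⟨ζ, hζ, hne⟩ := exists_mem_sphere_pow_ne_pow hi₀
  let d : Fin N → ℂ := Function.update 1 i₀ ζ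
  have hd : diagonal d ∈ unitaryGroup (Fin N) ℂ := diagonal_mem_unitaryGroup fun i => by
    obtain rfl | hi := eq_or_ne i i₀
    · simpa only [d, Function.update_self] using hζ
    · simp [d, hi]
  have hdet : (diagonal d).det = ζ := by
    rw [det_diagonal, Finset.prod_update_of_mem (Finset.mem_univ _)]
    simp
  have hpow : ∏ i, d i ^ k i = ζ ^ k i₀ := by
    rw [Finset.prod_eq_single i₀ (fun i _ hi => by simp [d, hi]) (by simp)]
    simp [d]
  have hmul (U : Matrix (Fin N) (Fin N) ℂ) : ∏ i, ∏ a, (diagonal d * U) i a ^ (κ i).1 a =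
      ζ ^ k i₀ * ∏ i, ∏ a, U i a ^ (κ i).1 a := by
    simp only [diagonal_mul, mul_pow, Finset.prod_mul_distrib, Finset.prod_pow_eq_pow_sum,
      Exponent.sum_eq, hpow]
  have h := integral_mul_left_mul_star_det_pow (ℙ := ℙ)
    (fun U => ∏ i, ∏ a, U i a ^ (κ i).1 a) m ⟨_, hd⟩
  simp only [hmul, hdet, mul_assoc, integral_const_mul] at h
  exact (mul_eq_mul_right_iff.1 h).resolve_left hne

lemma prod_prod_mul_pow {k : Fin N → ℕ} (g U : Matrix (Fin N) (Fin N) ℂ)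
    (κ : ∀ i, Exponent (Fin N) (k i)) :
    ∏ i, ∏ a, (g * U) i a ^ (κ i).1 a = ∑ μ : ∀ i, Exponent (Fin N) (k i),
      (∏ i, symPow (k i) U (μ i) (κ i)) * ∏ i, ∏ a, g i a ^ (μ i).1 a := by
  simp only [mul_apply_eq_vecMul, prod_vecMul_pow, Finset.prod_univ_sum, Fintype.piFinset_univ,
    Finset.prod_mul_distrib]

variable [IsFiniteMeasure ℙ]

lemma integrable_prod_symPow_mul_star_det_pow {k : Fin N → ℕ}
    (μ κ : ∀ i, Exponent (Fin N) (k i)) (m : ℕ) :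
    Integrable (fun U : unitaryGroup (Fin N) ℂ =>
      (∏ i, symPow (k i) U.1 (μ i) (κ i)) * star U.1.det ^ m) ℙ :=
  integrable_of_continuous <| .mul (continuous_finsetProd _ fun i _ =>
    ((continuous_symPow (k i)).comp continuous_subtype_val).matrix_elem _ _) (by fun_prop)

variable [ℙ.IsMulLeftInvariant]

lemma integral_prod_symPow_mul_star_det_pow_eq_zero {m : ℕ} {k : Fin N → ℕ}
    (μ κ : ∀ i, Exponent (Fin N) (k i)) {i₀ : Fin N} (hi₀ : k i₀ ≠ m) :
    ∫ U : unitaryGroup (Fin N) ℂ,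
      (∏ i, symPow (k i) U.1 (μ i) (κ i)) * star U.1.det ^ m ∂ℙ = 0 := by
  refine congrFun (eq_zero_of_sum_mul_prod_unitary_eq_zero (r := fun μ =>
    ∫ U : unitaryGroup (Fin N) ℂ, (∏ i, symPow (k i) U.1 (μ i) (κ i)) * star U.1.det ^ m ∂ℙ)
    fun g hg => ?_) μ
  have h := integral_mul_left_mul_star_det_pow (ℙ := ℙ)
    (fun U => ∏ i, ∏ a, U i a ^ (κ i).1 a) m ⟨_, hg⟩
  rw [integral_prod_pow_mul_star_det_pow_eq_zero κ hi₀, mul_zero] at h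
  simp only [← integral_mul_const]
  rw [← integral_finsetSum _ fun ν _ =>
    (integrable_prod_symPow_mul_star_det_pow ν κ m).mul_const _, ← h]
  refine integral_congr_ae (.of_forall fun U => ?_)
  simp only [prod_prod_mul_pow, Finset.sum_mul, mul_right_comm]

lemma continuous_coeff_symSeries (k : ℕ) :
    Continuous fun U : unitaryGroup (Fin N) ℂ => PowerSeries.coeff k (symSeries U.1) := by
  simp only [symSeries, PowerSeries.coeff_mk]
  exact ((continuous_symPow k).comp continuous_subtype_val).matrix_trace

lemma continuous_jacobiTrudi_symSeries (b : ℕ) :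
    Continuous fun U : unitaryGroup (Fin N) ℂ => jacobiTrudi N (symSeries U.1) b := by
  refine continuous_matrix fun i j => ?_
  simp only [jacobiTrudi, of_apply, PowerSeries.coeff_X_pow_mul']
  split_ifs
  exacts [continuous_coeff_symSeries _, continuous_const]

lemma integral_prod_coeff_symSeries_mul_star_det_pow_eq_zero {m : ℕ} {k : Fin N → ℕ} {i₀ : Fin N}
    (hi₀ : k i₀ ≠ m) :
    ∫ U : unitaryGroup (Fin N) ℂ,
      (∏ i, PowerSeries.coeff (k i) (symSeries U.1)) * star U.1.det ^ m ∂ℙ = 0 := by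
  simp only [symSeries, PowerSeries.coeff_mk, trace, diag_apply, Finset.prod_univ_sum,
    Fintype.piFinset_univ, Finset.sum_mul]
  rw [integral_finsetSum _ fun μ _ => integrable_prod_symPow_mul_star_det_pow μ μ m]
  exact Finset.sum_eq_zero fun μ _ => integral_prod_symPow_mul_star_det_pow_eq_zero μ μ hi₀

lemma integral_prod_coeff_X_pow_mul_symSeries_mul_star_det_pow (m : ℕ) (k : Fin N → ℕ) :
    ∫ U : unitaryGroup (Fin N) ℂ,
        (∏ i, PowerSeries.coeff (k i) (PowerSeries.X ^ (i : ℕ) * symSeries U.1)) *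
          star U.1.det ^ m ∂ℙ =
      (∏ i, if k i = m + i then 1 else 0) * ∫ U : unitaryGroup (Fin N) ℂ,
        PowerSeries.coeff m (symSeries U.1) ^ N * star U.1.det ^ m ∂ℙ := by
  by_cases hk : ∀ i, k i = m + i
  · simp [hk, PowerSeries.coeff_X_pow_mul]
  obtain ⟨i₀, hi₀⟩ := not_forall.1 hk
  rw [Finset.prod_eq_zero (Finset.mem_univ i₀) (if_neg hi₀), zero_mul]
  by_cases hle : ∀ i : Fin N, (i : ℕ) ≤ k i
  · simp only [PowerSeries.coeff_X_pow_mul', hle, if_true]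
    refine integral_prod_coeff_symSeries_mul_star_det_pow_eq_zero (i₀ := i₀) fun h => hi₀ ?_
    rw [← h, Nat.sub_add_cancel (hle i₀)]
  · obtain ⟨i, hi⟩ := not_forall.1 hle
    have hzero (U : unitaryGroup (Fin N) ℂ) :
        ∏ i, PowerSeries.coeff (k i) (PowerSeries.X ^ (i : ℕ) * symSeries U.1) = 0 :=
      Finset.prod_eq_zero (Finset.mem_univ i) (by rw [PowerSeries.coeff_X_pow_mul', if_neg hi])
    simp only [hzero, zero_mul, integral_zero]

end Orthogonality

section Heine

open Matrix Polynomial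

variable {N : ℕ} {ℙ : Measure (unitaryGroup (Fin N) ℂ)}

lemma commute_conjTranspose_of_mem_unitaryGroup {n : Type*} [Fintype n] [DecidableEq n]
    {U : Matrix n n ℂ} (hU : U ∈ unitaryGroup n ℂ) : Commute Uᴴ U := by
  rw [← star_eq_conjTranspose, commute_iff_eq, mem_unitaryGroup_iff.1 hU,
    mem_unitaryGroup_iff'.1 hU]

lemma sum_support_coeff_mul_ite_eq {R : Type*} [Semiring R] (f : R[X]) (k : ℕ) :
    ∑ b ∈ f.support, f.coeff b * (if k = b then 1 else 0) = f.coeff k := by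
  simp +contextual [eq_comm]

lemma det_sum_smul {n ι R : Type*} [Fintype n] [DecidableEq n] [CommRing R] (s : Finset ι)
    (c : ι → R) (A : ι → Matrix n n R) :
    (∑ b ∈ s, c b • A b).det = ∑ σ : Equiv.Perm n, ∑ b ∈ Fintype.piFinset fun _ => s,
      (Equiv.Perm.sign σ • ∏ i, c (b i)) * ∏ i, A (b i) (σ i) i := by
  simp only [det_apply, Matrix.sum_apply, Matrix.smul_apply, smul_eq_mul, Finset.prod_univ_sum,
    Finset.prod_mul_distrib, Finset.smul_sum, smul_mul_assoc]

lemma integral_det_aeval_eq_integral_mul_det [IsFiniteMeasure ℙ] [ℙ.IsMulLeftInvariant] {m : ℕ}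
    (hm : N ≤ m) (f : ℂ[X]) :
    ∫ U : unitaryGroup (Fin N) ℂ, (aeval U.1 f).det * star U.1.det ^ m ∂ℙ =
      (∫ U : unitaryGroup (Fin N) ℂ,
        PowerSeries.coeff m (symSeries U.1) ^ N * star U.1.det ^ m ∂ℙ) *
      (of fun i j : Fin N => f.coeff (m + j - i)).det := by
  have hcoeff : of (fun i j : Fin N => f.coeff (m + j - i)) = ∑ b ∈ f.support, f.coeff b •
      of fun i j : Fin N => if b + (i : ℕ) = m + j then 1 else 0 := by
    ext i j
    have h (b : ℕ) : b + (i : ℕ) = m + j ↔ m + j - i = b := by omega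
    simp only [Matrix.sum_apply, Matrix.smul_apply, of_apply, smul_eq_mul, h,
      sum_support_coeff_mul_ite_eq]
  have hint (σ : Equiv.Perm (Fin N)) (b : Fin N → ℕ) :
      Integrable (fun U : unitaryGroup (Fin N) ℂ => (Equiv.Perm.sign σ • ∏ i, f.coeff (b i)) *
        (∏ i, jacobiTrudi N (symSeries U.1) (b i) (σ i) i) * star U.1.det ^ m) ℙ :=
    integrable_of_continuous <| .mul (continuous_const.mul <| continuous_finsetProd _ fun i _ =>
      (continuous_jacobiTrudi_symSeries (b i)).matrix_elem _ _) (by fun_prop)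
  simp only [det_aeval_eq_det_sum_jacobiTrudi (commute_conjTranspose_of_mem_unitaryGroup
    (Subtype.prop _)), hcoeff, det_sum_smul, Finset.sum_mul, Finset.mul_sum]
  rw [integral_finsetSum _ fun σ _ => integrable_finsetSum _ fun b _ => hint σ b]
  refine Finset.sum_congr rfl fun σ _ => ?_
  rw [integral_finsetSum _ fun b _ => hint σ b]
  refine Finset.sum_congr rfl fun b _ => ?_
  simp only [mul_assoc, integral_const_mul]
  have h := integral_prod_coeff_X_pow_mul_symSeries_mul_star_det_pow (ℙ := ℙ) m fun i => b i + σ i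
  simp only [jacobiTrudi, of_apply]
  rw [h]
  ring

lemma integral_coeff_symSeries_pow_mul_star_det_pow [IsProbabilityMeasure ℙ] [ℙ.IsMulLeftInvariant]
    {m : ℕ} (hm : N ≤ m) :
    ∫ U : unitaryGroup (Fin N) ℂ,
      PowerSeries.coeff m (symSeries U.1) ^ N * star U.1.det ^ m ∂ℙ = 1 := by
  have h := integral_det_aeval_eq_integral_mul_det (ℙ := ℙ) hm (X ^ m)
  have hone : of (fun i j : Fin N => (X ^ m : ℂ[X]).coeff (m + j - i)) = 1 := by
    ext i j
    have hij : m + (j : ℕ) - i = m ↔ i = j := by rw [Fin.ext_iff]; omega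
    simp only [of_apply, coeff_X_pow, hij, one_apply]
  have hdet (U : unitaryGroup (Fin N) ℂ) :
      (aeval U.1 (X ^ m : ℂ[X])).det * star U.1.det ^ m = 1 := by
    rw [map_pow, aeval_X, det_pow, ← mul_pow, ← det_conjTranspose, ← det_mul,
      ← star_eq_conjTranspose, mem_unitaryGroup_iff.1 U.2, det_one, one_pow]
  rw [hone, det_one, mul_one] at h
  simp only [hdet, integral_const, probReal_univ, one_smul] at h
  exact h.symm

/-- Heine's identity for the symbol `z ↦ z⁻ᵐ f(z)`. -/
lemma integral_det_aeval [IsProbabilityMeasure ℙ] [ℙ.IsMulLeftInvariant] {m : ℕ} (hm : N ≤ m)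
    (f : ℂ[X]) :
    ∫ U : unitaryGroup (Fin N) ℂ, (aeval U.1 f).det * star U.1.det ^ m ∂ℙ =
      (of fun i j : Fin N => f.coeff (m + j - i)).det := by
  rw [integral_det_aeval_eq_integral_mul_det hm, integral_coeff_symSeries_pow_mul_star_det_pow hm,
    one_mul]

end Heine

local instance : Fact (0 < 2 * π) := ⟨two_pi_pos⟩

section EigenvalueStatistics

open Matrix Polynomial
open scoped Topology

variable {N : ℕ} {ℙ : Measure (unitaryGroup (Fin N) ℂ)}

/-- The multiplicative statistic `∏ⱼ g(θⱼ)` of the eigenvalue angles. -/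
def eigenProd (g : AddCircle (2 * π) → ℂ) (U : unitaryGroup (Fin N) ℂ) : ℂ :=
  ((eigenAngles N U).map fun θ : ℝ => g θ).prod

open Classical in
/-- The number of eigenvalue angles lying in `B` modulo `2π`. -/
def eigenCount (B : Set (AddCircle (2 * π))) (U : unitaryGroup (Fin N) ℂ) : ℕ :=
  (eigenAngles N U).countP fun θ : ℝ => (θ : AddCircle (2 * π)) ∈ B

lemma card_eigenAngles (U : unitaryGroup (Fin N) ℂ) : (eigenAngles N U).card = N := by
  rw [eigenAngles, Multiset.card_map, ← (IsAlgClosed.splits _).natDegree_eq_card_roots,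
    charpoly_natDegree_eq_dim, Fintype.card_fin]

open scoped Matrix.Norms.L2Operator in
lemma norm_eq_one_of_mem_roots_charpoly {U : unitaryGroup (Fin N) ℂ} {z : ℂ}
    (hz : z ∈ U.1.charpoly.roots) : ‖z‖ = 1 :=
  mem_sphere_zero_iff_norm.1 <| spectrum.subset_circle_of_unitary U.2 <|
    mem_spectrum_of_isRoot_charpoly (isRoot_of_mem_roots hz)

lemma fourier_one_arg {z : ℂ} (hz : ‖z‖ = 1) :
    fourier 1 ((z.arg : ℝ) : AddCircle (2 * π)) = z := by
  rw [fourier_coe_apply, Int.cast_one, mul_one, Complex.ofReal_mul, Complex.ofReal_ofNat]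
  nth_rewrite 2 [← Complex.norm_mul_exp_arg_mul_I z]
  rw [hz, Complex.ofReal_one, one_mul]
  congr 1
  field_simp [pi_ne_zero]

lemma eigenProd_comp_fourier_one (h : ℂ → ℂ) (U : unitaryGroup (Fin N) ℂ) :
    eigenProd (fun x => h (fourier 1 x)) U = (U.1.charpoly.roots.map h).prod := by
  rw [eigenProd, eigenAngles, Multiset.map_map]
  refine congrArg _ (Multiset.map_congr rfl fun z hz => congrArg h ?_)
  refine Eq.trans (congrArg _ ?_) (fourier_one_arg (norm_eq_one_of_mem_roots_charpoly hz))
  dsimp only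
  split_ifs
  · rfl
  · rw [AddCircle.coe_add, AddCircle.coe_period, add_zero]

lemma norm_eigenProd_le {g : AddCircle (2 * π) → ℂ} {C : ℝ} (hC : ∀ x, ‖g x‖ ≤ C)
    (U : unitaryGroup (Fin N) ℂ) : ‖eigenProd g U‖ ≤ C ^ N := by
  suffices h : ∀ s : Multiset ℝ, ‖(s.map fun θ : ℝ => g θ).prod‖ ≤ C ^ s.card by
    simpa only [eigenProd, card_eigenAngles] using h (eigenAngles N U)
  intro s
  induction s using Multiset.induction_on with
  | empty => simp
  | cons θ s ih =>
    rw [Multiset.map_cons, Multiset.prod_cons, norm_mul, Multiset.card_cons, pow_succ']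
    exact mul_le_mul (hC _) ih (norm_nonneg _) ((norm_nonneg _).trans (hC 0))

lemma tendsto_eigenProd {g : ℕ → AddCircle (2 * π) → ℂ} {G : AddCircle (2 * π) → ℂ}
    (hG : ∀ x, Tendsto (fun k => g k x) atTop (𝓝 (G x))) (U : unitaryGroup (Fin N) ℂ) :
    Tendsto (fun k => eigenProd (g k) U) atTop (𝓝 (eigenProd G U)) :=
  tendsto_multiset_prod (f := fun (θ : ℝ) k => g k θ) (a := fun θ : ℝ => G θ) (eigenAngles N U)
    fun θ _ => hG θ

open Classical in
lemma eigenProd_ite_exp_one (B : Set (AddCircle (2 * π))) (U : unitaryGroup (Fin N) ℂ) :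
    eigenProd (fun x => if x ∈ B then (rexp 1 : ℂ) else 1) U = rexp (eigenCount B U) := by
  rw [eigenProd, eigenCount]
  generalize eigenAngles N U = s
  induction s using Multiset.induction_on with
  | empty => simp
  | cons θ s ih =>
    rw [Multiset.map_cons, Multiset.prod_cons, ih, Multiset.countP_cons]
    split_ifs
    · rw [Nat.cast_add, Nat.cast_one, Real.exp_add, mul_comm, Complex.ofReal_mul]
    · rw [one_mul, add_zero]

/-- The `N × N` Toeplitz matrix with symbol `g`. -/
def toeplitz (N : ℕ) (g : AddCircle (2 * π) → ℂ) : Matrix (Fin N) (Fin N) ℂ :=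
  of fun i j => fourierCoeff g ((j : ℤ) - i)

lemma tendsto_fourierCoeff {g : ℕ → AddCircle (2 * π) → ℂ} {G : AddCircle (2 * π) → ℂ} {C : ℝ}
    (hg : ∀ k, AEStronglyMeasurable (g k) AddCircle.haarAddCircle) (hC : ∀ k x, ‖g k x‖ ≤ C)
    (hG : ∀ x, Tendsto (fun k => g k x) atTop (𝓝 (G x))) (n : ℤ) :
    Tendsto (fun k => fourierCoeff (g k) n) atTop (𝓝 (fourierCoeff G n)) := by
  refine tendsto_integral_of_dominated_convergence (fun _ => C)
    (fun k => (map_continuous (fourier (-n))).aestronglyMeasurable.smul (hg k))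
    (integrable_const C) (fun k => .of_forall fun x => ?_)
    (.of_forall fun x => (hG x).const_smul _)
  rw [norm_smul, fourier_apply, Circle.norm_coe, one_mul]
  exact hC k x

/-- Heine's identity `E ∏ⱼ g(θⱼ) = det (ĝ(j - i))` for the symbol `g`. -/
def HeineIdentity (ℙ : Measure (unitaryGroup (Fin N) ℂ)) (g : AddCircle (2 * π) → ℂ) : Prop :=
  AEStronglyMeasurable (eigenProd g) ℙ ∧ ∫ U, eigenProd g U ∂ℙ = (toeplitz N g).det

lemma HeineIdentity.of_tendsto [IsFiniteMeasure ℙ] {g : ℕ → AddCircle (2 * π) → ℂ}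
    {G : AddCircle (2 * π) → ℂ} {C : ℝ} (h : ∀ k, HeineIdentity ℙ (g k))
    (hg : ∀ k, AEStronglyMeasurable (g k) AddCircle.haarAddCircle) (hC : ∀ k x, ‖g k x‖ ≤ C)
    (hG : ∀ x, Tendsto (fun k => g k x) atTop (𝓝 (G x))) : HeineIdentity ℙ G := by
  refine ⟨aestronglyMeasurable_of_tendsto_ae atTop (fun k => (h k).1)
    (.of_forall (tendsto_eigenProd hG)), ?_⟩
  have hint : Tendsto (fun k => ∫ U, eigenProd (g k) U ∂ℙ) atTop (𝓝 (∫ U, eigenProd G U ∂ℙ)) :=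
    tendsto_integral_of_dominated_convergence (fun _ => C ^ N) (fun k => (h k).1)
      (integrable_const _) (fun k => .of_forall (norm_eigenProd_le (hC k)))
      (.of_forall (tendsto_eigenProd hG))
  have htoeplitz : Tendsto (fun k => toeplitz N (g k)) atTop (𝓝 (toeplitz N G)) :=
    tendsto_pi_nhds.2 fun i => tendsto_pi_nhds.2 fun j => tendsto_fourierCoeff hg hC hG _
  have hdet := ((continuous_id.matrix_det).tendsto (toeplitz N G)).comp htoeplitz
  simp only [(h _).2] at hint
  exact tendsto_nhds_unique hint hdet

lemma fourier_eq_zpow (n : ℤ) (x : AddCircle (2 * π)) : fourier n x = fourier 1 x ^ n := by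
  rw [fourier_one, fourier_apply, AddCircle.toCircle_zsmul, Circle.coe_zpow]

lemma star_fourier_one_pow_mul_pow (m b : ℕ) (x : AddCircle (2 * π)) :
    star (fourier 1 x) ^ m * fourier 1 x ^ b = fourier (b - m : ℤ) x := by
  rw [fourier_eq_zpow (b - m), fourier_one, zpow_sub₀ (Circle.coe_ne_zero _), RCLike.star_def,
    ← Circle.coe_inv_eq_conj, Circle.coe_inv, inv_pow, zpow_natCast, zpow_natCast, div_eq_inv_mul]

lemma eventually_exists_polynomial {g : C(AddCircle (2 * π), ℂ)}
    (hg : g ∈ Submodule.span ℂ (Set.range (@fourier (2 * π)))) :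
    ∀ᶠ m : ℕ in atTop, ∃ f : ℂ[X], ∀ x, g x = star (fourier 1 x) ^ m * f.eval (fourier 1 x) := by
  induction hg using Submodule.span_induction with
  | mem g hg =>
    obtain ⟨n, rfl⟩ := hg
    filter_upwards [eventually_ge_atTop n.natAbs] with m hm
    refine ⟨X ^ (m + n).toNat, fun x => ?_⟩
    rw [eval_pow, eval_X, star_fourier_one_pow_mul_pow]
    congr 2
    omega
  | zero => exact .of_forall fun m => ⟨0, fun x => by simp⟩
  | add g₁ g₂ _ _ h₁ h₂ =>
    filter_upwards [h₁, h₂] with m ⟨f₁, hf₁⟩ ⟨f₂, hf₂⟩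
    exact ⟨f₁ + f₂, fun x => by rw [ContinuousMap.add_apply, hf₁, hf₂, eval_add, mul_add]⟩
  | smul c g _ h =>
    filter_upwards [h] with m ⟨f, hf⟩
    exact ⟨C c * f, fun x => by
      rw [ContinuousMap.smul_apply, hf, eval_mul, eval_C, smul_eq_mul, mul_left_comm]⟩

lemma fourierCoeff_star_fourier_one_pow_mul_eval (m : ℕ) (f : ℂ[X]) (n : ℤ) :
    fourierCoeff (fun x : AddCircle (2 * π) => star (fourier 1 x) ^ m * f.eval (fourier 1 x)) n =
      ∑ b ∈ f.support, f.coeff b * if n = b - m then 1 else 0 := by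
  have h : (fun x : AddCircle (2 * π) => star (fourier 1 x) ^ m * f.eval (fourier 1 x)) =
      ∑ b ∈ f.support, f.coeff b • (fourier (b - m : ℤ) : AddCircle (2 * π) → ℂ) := by
    funext x
    simp only [eval_eq_sum, Polynomial.sum, Finset.mul_sum, mul_left_comm,
      star_fourier_one_pow_mul_pow, Finset.sum_apply, Pi.smul_apply, smul_eq_mul]
  rw [h, fourierCoeff.sum _ _ fun b _ =>
    (integrable_of_continuous (map_continuous (fourier _))).smul _, Finset.sum_apply]
  simp only [fourierCoeff.const_smul, fourierCoeff_fourier, Pi.single_apply, smul_eq_mul]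

lemma eigenProd_star_fourier_one_pow_mul_eval (m : ℕ) (f : ℂ[X]) (U : unitaryGroup (Fin N) ℂ) :
    eigenProd (fun x => star (fourier 1 x) ^ m * f.eval (fourier 1 x)) U =
      (aeval U.1 f).det * star U.1.det ^ m := by
  rw [eigenProd_comp_fourier_one fun z => star z ^ m * f.eval z, Multiset.prod_map_mul,
    Multiset.prod_map_pow, det_aeval, det_eq_prod_roots_charpoly, mul_comm]
  congr 2
  exact (map_multiset_prod (starRingEnd ℂ) _).symm

lemma heineIdentity_star_fourier_one_pow_mul_eval [IsProbabilityMeasure ℙ] [ℙ.IsMulLeftInvariant]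
    {m : ℕ} (hm : N ≤ m) (f : ℂ[X]) :
    HeineIdentity ℙ fun x => star (fourier 1 x) ^ m * f.eval (fourier 1 x) := by
  rw [HeineIdentity, funext (eigenProd_star_fourier_one_pow_mul_eval m f), integral_det_aeval hm]
  refine ⟨Continuous.aestronglyMeasurable ?_, congrArg _ ?_⟩
  · exact ((f.continuous_aeval.comp continuous_subtype_val).matrix_det).mul (by fun_prop)
  · ext i j
    rw [toeplitz, of_apply, of_apply, fourierCoeff_star_fourier_one_pow_mul_eval]
    have h (b : ℕ) : (j : ℤ) - i = b - m ↔ m + j - i = b := by omega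
    simp only [h, sum_support_coeff_mul_ite_eq]

lemma heineIdentity_continuousMap [IsProbabilityMeasure ℙ] [ℙ.IsMulLeftInvariant]
    (g : C(AddCircle (2 * π), ℂ)) : HeineIdentity ℙ g := by
  have hg : g ∈ closure (Submodule.span ℂ (Set.range (@fourier (2 * π))) : Set _) := by
    rw [← Submodule.topologicalClosure_coe, span_fourier_closure_eq_top]
    exact Set.mem_univ g
  obtain ⟨u, hu, hlim⟩ := mem_closure_iff_seq_limit.1 hg
  obtain ⟨C, hC⟩ := hlim.norm.bddAbove_range
  refine .of_tendsto (g := fun k => u k) (C := C) (fun k => ?_)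
    (fun k => (map_continuous (u k)).aestronglyMeasurable)
    (fun k x => ((u k).norm_coe_le_norm x).trans (hC ⟨k, rfl⟩))
    (fun x => ((continuous_eval_const x).tendsto g).comp hlim)
  obtain ⟨m, ⟨f, hf⟩, hm⟩ :=
    ((eventually_exists_polynomial (hu k)).and (eventually_ge_atTop N)).exists
  rw [funext hf]
  exact heineIdentity_star_fourier_one_pow_mul_eval hm f

open Classical in
lemma heineIdentity_ite [IsProbabilityMeasure ℙ] [ℙ.IsMulLeftInvariant]
    {B : Set (AddCircle (2 * π))} (hB : IsClosed B) (c : ℂ) :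
    HeineIdentity ℙ fun x => if x ∈ B then c else 1 := by
  let u (k : ℕ) : C(AddCircle (2 * π), ℂ) :=
    ⟨fun x => 1 + ((hB.apprSeq k x : ℝ) : ℂ) * (c - 1), by fun_prop⟩
  refine .of_tendsto (g := fun k => u k) (C := 1 + ‖c - 1‖) (fun k => heineIdentity_continuousMap _)
    (fun k => (map_continuous (u k)).aestronglyMeasurable) (fun k x => ?_) fun x => ?_
  · refine (norm_add_le _ _).trans ?_
    rw [norm_one, norm_mul, Complex.norm_real, NNReal.norm_eq]
    gcongr
    exact mul_le_of_le_one_left (norm_nonneg _) (HasOuterApproxClosed.apprSeq_apply_le_one hB k x)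
  · have h := tendsto_pi_nhds.1 (HasOuterApproxClosed.tendsto_apprSeq hB) x
    have hcont : Continuous fun a : NNReal => 1 + ((a : ℝ) : ℂ) * (c - 1) := by fun_prop
    have hlim := (hcont.tendsto _).comp h
    have hval : 1 + (((B.indicator (fun _ => 1) x : NNReal) : ℝ) : ℂ) * (c - 1) =
        if x ∈ B then c else 1 := by
      by_cases hx : x ∈ B <;> simp [hx]
    exact hval ▸ hlim

end EigenvalueStatistics

section HermitianDeterminant

open Matrix
open scoped ComplexOrder

lemma one_add_mul_le_exp {l : ℝ} (hl₀ : 0 ≤ l) (hl₁ : l ≤ 1) :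
    1 + (rexp 1 - 1) * l ≤ rexp (l + l * (1 - l)) := by
  -- For `X` Bernoulli of mean `l`, `E exp (X - l) ≤ E (1 + (X - l) + (X - l)²) = 1 + l (1 - l)`.
  have h₀ : rexp (-l) ≤ 1 - l + l ^ 2 := by
    linarith [(abs_le.1 (abs_exp_sub_one_sub_id_le (x := -l)
      (by rwa [abs_neg, abs_of_nonneg hl₀]))).2]
  have h₁ : rexp (1 - l) ≤ 1 + (1 - l) + (1 - l) ^ 2 := by
    linarith [(abs_le.1 (abs_exp_sub_one_sub_id_le (x := 1 - l)
      (abs_le.2 ⟨by linarith, by linarith⟩))).2]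
  calc 1 + (rexp 1 - 1) * l = rexp l * ((1 - l) * rexp (-l) + l * rexp (1 - l)) := by
        rw [Real.exp_sub, Real.exp_neg]
        field_simp
        ring
    _ ≤ rexp l * ((1 - l) * (1 - l + l ^ 2) + l * (1 + (1 - l) + (1 - l) ^ 2)) := by
        have : 0 ≤ 1 - l := sub_nonneg.2 hl₁
        gcongr
    _ = rexp l * (l * (1 - l) + 1) := by ring
    _ ≤ rexp l * rexp (l * (1 - l)) := by gcongr; exact add_one_le_exp _
    _ = rexp (l + l * (1 - l)) := (Real.exp_add _ _).symm

variable {n 𝕜 : Type*} [Fintype n] [DecidableEq n] [RCLike 𝕜] {K : Matrix n n 𝕜}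

lemma det_conjStarAlgAut (V : unitaryGroup n 𝕜) (A : Matrix n n 𝕜) :
    (Unitary.conjStarAlgAut 𝕜 _ V A).det = A.det := by
  rw [Unitary.conjStarAlgAut_apply, det_mul_right_comm, Unitary.mul_star_self_of_mem V.2, one_mul]

lemma trace_conjStarAlgAut (V : unitaryGroup n 𝕜) (A : Matrix n n 𝕜) :
    (Unitary.conjStarAlgAut 𝕜 _ V A).trace = A.trace := by
  rw [Unitary.conjStarAlgAut_apply, trace_mul_cycle, Unitary.coe_star_mul_self, one_mul]

lemma det_one_add_smul_eq_prod_eigenvalues (hK : K.IsHermitian) (c : 𝕜) :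
    (1 + c • K).det = ∏ i, (1 + c * hK.eigenvalues i) := by
  conv_lhs => rw [hK.spectral_theorem, ← map_one (Unitary.conjStarAlgAut 𝕜 _ hK.eigenvectorUnitary),
    ← map_smul, ← map_add, det_conjStarAlgAut, ← diagonal_one, ← diagonal_smul, diagonal_add,
    det_diagonal]
  rfl

lemma trace_mul_self_eq_sum_sq_eigenvalues (hK : K.IsHermitian) :
    (K * K).trace = ∑ i, (hK.eigenvalues i : 𝕜) ^ 2 := by
  conv_lhs => rw [hK.spectral_theorem, ← map_mul, trace_conjStarAlgAut, diagonal_mul_diagonal,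
    trace_diagonal]
  simp only [sq, Function.comp_apply]

lemma eigenvalues_le_one (hK : K.IsHermitian) (hK₁ : (1 - K).PosSemidef) (i : n) :
    hK.eigenvalues i ≤ 1 := by
  have h := hK₁.re_dotProduct_nonneg (hK.eigenvectorBasis i)
  have hnorm : star ⇑(hK.eigenvectorBasis i) ⬝ᵥ ⇑(hK.eigenvectorBasis i) = 1 := by
    rw [dotProduct_comm, ← EuclideanSpace.inner_eq_star_dotProduct, inner_self_eq_norm_sq_to_K,
      hK.eigenvectorBasis.norm_eq_one, RCLike.ofReal_one, one_pow]
  rwa [sub_mulVec, one_mulVec, dotProduct_sub, map_sub, ← hK.eigenvalues_eq, hnorm, RCLike.one_re,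
    sub_nonneg] at h

lemma re_det_one_add_smul_le_exp (hK₀ : K.PosSemidef) (hK₁ : (1 - K).PosSemidef) :
    RCLike.re (1 + ((rexp 1 - 1 : ℝ) : 𝕜) • K).det ≤
      rexp (RCLike.re K.trace + (RCLike.re K.trace - RCLike.re (K * K).trace)) := by
  let l := hK₀.1.eigenvalues
  have hdet : (1 + ((rexp 1 - 1 : ℝ) : 𝕜) • K).det = ((∏ i, (1 + (rexp 1 - 1) * l i) : ℝ) : 𝕜) := by
    rw [det_one_add_smul_eq_prod_eigenvalues hK₀.1]
    push_cast
    rfl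
  have htrace : RCLike.re K.trace = ∑ i, l i := by
    rw [hK₀.1.trace_eq_sum_eigenvalues, ← RCLike.ofReal_sum, RCLike.ofReal_re]
  have htrace_sq : RCLike.re (K * K).trace = ∑ i, l i ^ 2 := by
    rw [trace_mul_self_eq_sum_sq_eigenvalues hK₀.1]
    exact_mod_cast RCLike.ofReal_re (K := 𝕜) _
  rw [hdet, RCLike.ofReal_re, htrace, htrace_sq, ← Finset.sum_sub_distrib, ← Finset.sum_add_distrib,
    Real.exp_sum]
  refine Finset.prod_le_prod (fun i _ => ?_) fun i _ => ?_
  · exact add_nonneg zero_le_one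
      (mul_nonneg (sub_nonneg.2 (one_le_exp zero_le_one)) (hK₀.eigenvalues_nonneg i))
  · rw [show l i - l i ^ 2 = l i * (1 - l i) by ring]
    exact one_add_mul_le_exp (hK₀.eigenvalues_nonneg i) (eigenvalues_le_one hK₀.1 hK₁ i)

end HermitianDeterminant

section ToeplitzOperators

open Matrix
open scoped ComplexOrder

variable {N : ℕ} {g : AddCircle (2 * π) → ℂ} {B : Set (AddCircle (2 * π))}

lemma toeplitz_one_add_smul (hg : Integrable g AddCircle.haarAddCircle) (c : ℂ) :
    toeplitz N (1 + c • g) = 1 + c • toeplitz N g := by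
  have h : (1 : AddCircle (2 * π) → ℂ) = fourier 0 := funext fun _ => fourier_zero.symm
  ext i j
  have hij : (j : ℤ) - i = 0 ↔ i = j := by rw [Fin.ext_iff]; omega
  rw [toeplitz, toeplitz, Matrix.add_apply, Matrix.smul_apply, of_apply, of_apply, h,
    fourierCoeff.add (integrable_of_continuous (map_continuous (fourier 0))) (hg.smul c),
    Pi.add_apply, fourierCoeff.const_smul,
    fourierCoeff_fourier, Pi.single_apply, Matrix.one_apply]
  simp only [hij]

lemma integrable_indicator_one (hB : MeasurableSet B) :
    Integrable (B.indicator (1 : AddCircle (2 * π) → ℂ)) AddCircle.haarAddCircle :=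
  (integrable_const (1 : ℂ)).indicator hB

open Classical in
lemma toeplitz_ite (hB : MeasurableSet B) (c : ℂ) :
    toeplitz N (fun x => if x ∈ B then c else 1) = 1 + (c - 1) • toeplitz N (B.indicator 1) := by
  rw [← toeplitz_one_add_smul (integrable_indicator_one hB)]
  congr 1
  funext x
  by_cases hx : x ∈ B <;> simp [hx]

lemma toeplitz_indicator_compl (hB : MeasurableSet B) :
    toeplitz N (Bᶜ.indicator 1) = 1 - toeplitz N (B.indicator 1) := by
  rw [sub_eq_add_neg, ← neg_one_smul ℂ, ← toeplitz_one_add_smul (integrable_indicator_one hB),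
    Set.indicator_compl, neg_one_smul, sub_eq_add_neg]

lemma isHermitian_toeplitz (hg : ∀ x, star (g x) = g x) : (toeplitz N g).IsHermitian := by
  ext i j
  rw [conjTranspose_apply, toeplitz, of_apply, of_apply, fourierCoeff, fourierCoeff,
    ← starRingEnd_apply, ← integral_conj]
  congr 1
  funext x
  rw [smul_eq_mul, map_mul, ← fourier_neg, neg_neg, starRingEnd_apply, hg, smul_eq_mul, neg_sub]

lemma star_dotProduct_toeplitz_mulVec (hg : Integrable g AddCircle.haarAddCircle)
    (v : Fin N → ℂ) :
    star v ⬝ᵥ toeplitz N g *ᵥ v =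
      ∫ x, star (∑ j : Fin N, v j * fourier (-(j : ℤ)) x) *
        (∑ j : Fin N, v j * fourier (-(j : ℤ)) x) * g x ∂AddCircle.haarAddCircle := by
  have hsum (x : AddCircle (2 * π)) : star (∑ j : Fin N, v j * fourier (-(j : ℤ)) x) *
      (∑ j : Fin N, v j * fourier (-(j : ℤ)) x) * g x =
      ∑ i : Fin N, ∑ j : Fin N, star (v i) * v j * (fourier (-((j : ℤ) - i)) x • g x) := by
    rw [star_sum, Finset.sum_mul_sum, Finset.sum_mul]
    refine Finset.sum_congr rfl fun i _ => (Finset.sum_mul _ _ _).trans ?_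
    refine Finset.sum_congr rfl fun j _ => ?_
    rw [show -((j : ℤ) - i) = i + -j by ring, fourier_add, star_mul',
      ← starRingEnd_apply (fourier _ x), ← fourier_neg, neg_neg, smul_eq_mul]
    ring
  have hint (i j : Fin N) := (hg.fourier_smul (-((j : ℤ) - i))).const_mul (star (v i) * v j)
  simp only [hsum]
  rw [integral_finsetSum _ fun i _ => integrable_finsetSum _ fun j _ => hint i j]
  refine Finset.sum_congr rfl fun i _ => ?_
  rw [mulVec, dotProduct, Finset.mul_sum, integral_finsetSum _ fun j _ => hint i j]
  refine Finset.sum_congr rfl fun j _ => ?_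
  rw [integral_const_mul, toeplitz, of_apply, fourierCoeff, Pi.star_apply, mul_assoc,
    mul_comm (v j)]

lemma posSemidef_toeplitz (hg : Integrable g AddCircle.haarAddCircle) (hg₀ : ∀ x, 0 ≤ g x) :
    (toeplitz N g).PosSemidef := by
  refine .of_dotProduct_mulVec_nonneg (isHermitian_toeplitz fun x => (hg₀ x).isSelfAdjoint)
    fun v => ?_
  rw [star_dotProduct_toeplitz_mulVec hg]
  exact integral_nonneg fun x => mul_nonneg (star_mul_self_nonneg _) (hg₀ x)

lemma posSemidef_toeplitz_indicator (hB : MeasurableSet B) :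
    (toeplitz N (B.indicator 1)).PosSemidef :=
  posSemidef_toeplitz (integrable_indicator_one hB) fun x =>
    Set.indicator_nonneg (fun _ _ => zero_le_one) x

lemma re_trace_toeplitz_mul_self (hg : ∀ x, star (g x) = g x) :
    (toeplitz N g * toeplitz N g).trace.re =
      ∑ i : Fin N, ∑ j : Fin N, ‖fourierCoeff g ((j : ℤ) - i)‖ ^ 2 := by
  rw [trace, Complex.re_sum]
  refine Finset.sum_congr rfl fun i _ => ?_
  rw [diag_apply, Matrix.mul_apply, Complex.re_sum]
  refine Finset.sum_congr rfl fun j _ => ?_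
  rw [← (isHermitian_toeplitz hg).apply j i, Complex.star_def, Complex.mul_conj, Complex.ofReal_re,
    Complex.normSq_eq_norm_sq, toeplitz, of_apply]

end ToeplitzOperators

section NumberVariance

variable {s : ℤ → ℝ} {p c : ℝ}

lemma tsum_le_of_le_div_sq {f : ℕ → ℝ} (hf : ∀ n, 0 ≤ f n) (hc : 0 ≤ c) (k : ℕ)
    (hfc : ∀ n : ℕ, f n ≤ c / (n + k + 1 : ℝ) ^ 2) : ∑' n, f n ≤ 2 * c / (k + 1) := by
  refine Real.tsum_le_of_sum_range_le hf fun n => ?_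
  calc ∑ i ∈ Finset.range n, f i
      ≤ ∑ i ∈ Finset.range n, c * (((i + (k + 1) : ℕ) : ℝ) ^ 2)⁻¹ :=
        Finset.sum_le_sum fun i _ => (hfc i).trans_eq (by push_cast; rw [div_eq_mul_inv, add_assoc])
    _ = c * ∑ i ∈ Finset.Ioo k (n + (k + 1)), ((i : ℝ) ^ 2)⁻¹ := by
        rw [← Finset.mul_sum, Finset.range_eq_Ico,
          Finset.sum_Ico_add' (fun i : ℕ => ((i : ℝ) ^ 2)⁻¹), zero_add,
          Finset.Ico_add_one_left_eq_Ioo]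
    _ ≤ c * (2 / (k + 1)) := mul_le_mul_of_nonneg_left (sum_Ioo_inv_sq_le _ _) hc
    _ = 2 * c / (k + 1) := by ring

lemma le_sum_add_of_hasSum {N : ℕ} (hs : HasSum s p) (hs₀ : ∀ d, 0 ≤ s d) (hc : 0 ≤ c)
    (hsc : ∀ d : ℤ, d ≠ 0 → s d ≤ c / (d : ℝ) ^ 2) (i : Fin N) :
    p ≤ ∑ j : Fin N, s ((j : ℤ) - i) +
      (2 * c / ((i.rev : ℕ) + 1) + 2 * c / ((i : ℕ) + 1)) := by
  have hshift : HasSum (fun d : ℤ => s (d - (i : ℕ))) p := (Equiv.subRight _).hasSum_iff.2 hs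
  have hnat : Summable fun n : ℕ => s ((n : ℤ) - (i : ℕ)) :=
    hshift.summable.comp_injective Nat.cast_injective
  have hneg : Summable fun n : ℕ => s (-((n : ℤ) + 1) - (i : ℕ)) :=
    hshift.summable.comp_injective (i := fun n : ℕ => -((n : ℤ) + 1)) fun a b h => by simpa using h
  have hrev : ((i.rev : ℕ) : ℝ) = N - i - 1 := by
    rw [Fin.val_rev, Nat.cast_sub i.2, Nat.cast_add_one]
    ring
  have hright : ∑' n : ℕ, s (((n + N : ℕ) : ℤ) - (i : ℕ)) ≤ 2 * c / ((i.rev : ℕ) + 1) := by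
    refine tsum_le_of_le_div_sq (fun n => hs₀ _) hc _ fun n =>
      (hsc _ (by omega)).trans_eq (congrArg (fun x : ℝ => c / x ^ 2) ?_)
    push_cast [hrev]
    ring
  have hleft : ∑' n : ℕ, s (-((n : ℤ) + 1) - (i : ℕ)) ≤ 2 * c / ((i : ℕ) + 1) := by
    refine tsum_le_of_le_div_sq (fun n => hs₀ _) hc _ fun n =>
      (hsc _ (by omega)).trans_eq (congrArg (fun x : ℝ => c / x) ?_)
    push_cast
    ring
  calc p = ∑' n : ℕ, s ((n : ℤ) - (i : ℕ)) + ∑' n : ℕ, s (-((n : ℤ) + 1) - (i : ℕ)) := by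
        exact hshift.tsum_eq.symm.trans (tsum_of_nat_of_neg_add_one hnat hneg)
    _ ≤ _ := by
        rw [← hnat.sum_add_tsum_nat_add N,
          ← Fin.sum_univ_eq_sum_range fun j => s ((j : ℤ) - (i : ℕ)),
          add_assoc]
        gcongr

lemma sum_fin_inv_eq_harmonic (N : ℕ) : ∑ i : Fin N, ((i : ℕ) + 1 : ℝ)⁻¹ = harmonic N := by
  rw [Fin.sum_univ_eq_sum_range fun i => ((i : ℝ) + 1)⁻¹, harmonic]
  push_cast
  rfl

lemma mul_sub_sum_sum_le_harmonic {N : ℕ} (hs : HasSum s p) (hs₀ : ∀ d, 0 ≤ s d) (hc : 0 ≤ c)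
    (hsc : ∀ d : ℤ, d ≠ 0 → s d ≤ c / (d : ℝ) ^ 2) :
    N * p - ∑ i : Fin N, ∑ j : Fin N, s ((j : ℤ) - i) ≤ 4 * c * harmonic N := by
  have hrev : ∑ i : Fin N, ((i.rev : ℕ) + 1 : ℝ)⁻¹ = harmonic N :=
    (Equiv.sum_comp Fin.revPerm fun i : Fin N => ((i : ℕ) + 1 : ℝ)⁻¹).trans
      (sum_fin_inv_eq_harmonic N)
  calc N * p - ∑ i : Fin N, ∑ j : Fin N, s ((j : ℤ) - i)
      = ∑ i : Fin N, (p - ∑ j : Fin N, s ((j : ℤ) - i)) := by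
        rw [Finset.sum_sub_distrib, Finset.sum_const, Finset.card_fin, nsmul_eq_mul]
    _ ≤ ∑ i : Fin N, (2 * c / ((i.rev : ℕ) + 1) + 2 * c / ((i : ℕ) + 1)) :=
        Finset.sum_le_sum fun i _ =>
          sub_le_iff_le_add'.2 (le_sum_add_of_hasSum hs hs₀ hc hsc i)
    _ = 4 * c * harmonic N := by
        simp only [div_eq_mul_inv, Finset.sum_add_distrib, ← Finset.mul_sum, hrev,
          sum_fin_inv_eq_harmonic]
        ring

end NumberVariance

section Indicator

variable {T : ℝ} [Fact (0 < T)] {B : Set (AddCircle T)}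

lemma fourierCoeff_indicator_zero (hB : MeasurableSet B) :
    fourierCoeff (B.indicator (1 : AddCircle T → ℂ)) 0 =
      AddCircle.haarAddCircle.real B := by
  simp only [fourierCoeff, neg_zero, fourier_zero, one_smul]
  exact (integral_indicator_const (1 : ℂ) hB).trans (by rw [Complex.real_smul, mul_one])

lemma hasSum_sq_norm_fourierCoeff_indicator (hB : MeasurableSet B) :
    HasSum (fun d : ℤ => ‖fourierCoeff (B.indicator (1 : AddCircle T → ℂ)) d‖ ^ 2)
      (AddCircle.haarAddCircle.real B) := by
  have hL2 : MemLp (B.indicator (1 : AddCircle T → ℂ)) 2 AddCircle.haarAddCircle :=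
    (memLp_const (1 : ℂ)).indicator hB
  have hint : ∫ x, ‖hL2.toLp _ x‖ ^ 2 ∂AddCircle.haarAddCircle =
      AddCircle.haarAddCircle.real B := by
    rw [← integral_indicator_one hB]
    refine integral_congr_ae (hL2.coeFn_toLp.mono fun x hx => ?_)
    by_cases h : x ∈ B <;> simp [hx, h]
  have h := hasSum_sq_fourierCoeff (hL2.toLp _)
  rwa [hint, fourierCoeff_congr_ae hL2.coeFn_toLp] at h

end Indicator

section Arcs

variable {a b : ℝ}

/-- The image on the circle `ℝ / 2πℤ` of the interval `[a, b]`. -/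
def arc (a b : ℝ) : Set (AddCircle (2 * π)) :=
  (fun x : ℝ => (x : AddCircle (2 * π))) '' Set.Icc a b

lemma isClosed_arc (a b : ℝ) : IsClosed (arc a b) :=
  (isCompact_Icc.image (AddCircle.continuous_mk' (2 * π))).isClosed

lemma coe_mem_arc_iff {x : ℝ} (hx : x ∈ Set.Ico a (a + 2 * π)) :
    (x : AddCircle (2 * π)) ∈ arc a b ↔ x ≤ b := by
  refine ⟨?_, fun h => ⟨x, ⟨hx.1, h⟩, rfl⟩⟩
  rintro ⟨y, hy, hyx⟩
  rcases lt_or_ge y (a + 2 * π) with hlt | hge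
  · exact (AddCircle.coe_eq_coe_iff_of_mem_Ico ⟨hy.1, hlt⟩ hx).1 hyx ▸ hy.2
  · exact hx.2.le.trans (hge.trans hy.2)

lemma fourierCoeff_indicator_arc (hab : a ≤ b) (hb : b ≤ a + 2 * π) (n : ℤ) :
    fourierCoeff ((arc a b).indicator (1 : AddCircle (2 * π) → ℂ)) n =
      (1 / (2 * π)) • ∫ x in a..b, fourier (-n) (x : AddCircle (2 * π)) := by
  let e (x : ℝ) : ℂ := fourier (-n) (x : AddCircle (2 * π))
  rw [fourierCoeff_eq_intervalIntegral _ n a,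
    intervalIntegral.integral_of_le (le_add_of_nonneg_right two_pi_pos.le),
    intervalIntegral.integral_of_le hab, integral_Ioc_eq_integral_Ioo]
  congr 1
  calc _ = ∫ x in Set.Ioo a (a + 2 * π), (Set.Iic b).indicator e x :=
        setIntegral_congr_fun measurableSet_Ioo fun x hx => by
          by_cases hxb : x ≤ b <;> simp [e, hxb, coe_mem_arc_iff (Set.Ioo_subset_Ico_self hx)]
    _ = ∫ x in Set.Ioc a b, e x := by
        rw [← integral_Ioc_eq_integral_Ioo, setIntegral_indicator measurableSet_Iic,
          Set.Ioc_inter_Iic, min_eq_right hb]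

lemma haarAddCircle_real_arc (hab : a ≤ b) (hb : b ≤ a + 2 * π) :
    AddCircle.haarAddCircle.real (arc a b) = (b - a) / (2 * π) := by
  have h := fourierCoeff_indicator_arc hab hb 0
  rw [fourierCoeff_indicator_zero (isClosed_arc a b).measurableSet] at h
  simp only [neg_zero, fourier_zero, intervalIntegral.integral_const, mul_one,
    Complex.real_smul] at h
  exact (mod_cast h : _ = 1 / (2 * π) * (b - a)).trans (one_div_mul_eq_div _ _)

lemma integral_fourier_neg {n : ℤ} (hn : n ≠ 0) (a b : ℝ) :
    ∫ x in a..b, (fourier (-n) (x : AddCircle (2 * π)) : ℂ) =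
      ((2 * π : ℝ) : ℂ) / (-2 * π * Complex.I * n) *
        (fourier (-n) (b : AddCircle (2 * π)) - fourier (-n) (a : AddCircle (2 * π))) := by
  rw [mul_sub]
  exact intervalIntegral.integral_eq_sub_of_hasDerivAt
    (fun x _ => has_antideriv_at_fourier_neg ⟨two_pi_pos⟩ hn x)
    (((map_continuous (fourier (-n))).comp (AddCircle.continuous_mk' _)).intervalIntegrable _ _)

lemma norm_fourierCoeff_indicator_arc_le (hab : a ≤ b) (hb : b ≤ a + 2 * π) {n : ℤ}
    (hn : n ≠ 0) :
    ‖fourierCoeff ((arc a b).indicator (1 : AddCircle (2 * π) → ℂ)) n‖ ≤ 1 / (π * |(n : ℝ)|) := by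
  have hfac : ‖((2 * π : ℝ) : ℂ) / (-2 * π * Complex.I * n)‖ = 1 / |(n : ℝ)| := by
    have := pi_pos
    simp only [norm_div, norm_mul, norm_neg, Complex.norm_real, Complex.norm_I,
      Complex.norm_intCast, Real.norm_eq_abs, abs_of_pos this, Complex.norm_ofNat, Nat.abs_ofNat,
      mul_one]
    field_simp
  have hdiff : ‖(fourier (-n) (b : AddCircle (2 * π)) - fourier (-n) (a : AddCircle (2 * π)) : ℂ)‖
      ≤ 2 := by
    refine (norm_sub_le _ _).trans_eq ?_
    rw [fourier_apply, fourier_apply, Circle.norm_coe, Circle.norm_coe, one_add_one_eq_two]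
  rw [fourierCoeff_indicator_arc hab hb, integral_fourier_neg hn, norm_smul, norm_mul, hfac,
    Real.norm_of_nonneg (by positivity)]
  calc _ ≤ 1 / (2 * π) * (1 / |(n : ℝ)| * 2) := by gcongr
    _ = 1 / (π * |(n : ℝ)|) := by field_simp

lemma sq_norm_fourierCoeff_indicator_arc_le (hab : a ≤ b) (hb : b ≤ a + 2 * π) {n : ℤ}
    (hn : n ≠ 0) : ‖fourierCoeff ((arc a b).indicator (1 : AddCircle (2 * π) → ℂ)) n‖ ^ 2 ≤
      1 / π ^ 2 / (n : ℝ) ^ 2 := by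
  calc _ ≤ (1 / (π * |(n : ℝ)|)) ^ 2 := by
        gcongr
        exact norm_fourierCoeff_indicator_arc_le hab hb hn
    _ = 1 / π ^ 2 / (n : ℝ) ^ 2 := by rw [div_pow, mul_pow, sq_abs, one_pow, div_div]

end Arcs

section ChernoffBound

open Matrix

variable {N : ℕ} {ℙ : Measure (unitaryGroup (Fin N) ℂ)} {B : Set (AddCircle (2 * π))} {a b : ℝ}

lemma HeineIdentity.integrable_eigenProd [IsFiniteMeasure ℙ] {g : AddCircle (2 * π) → ℂ} {C : ℝ}
    (h : HeineIdentity ℙ g) (hC : ∀ x, ‖g x‖ ≤ C) : Integrable (eigenProd g) ℙ :=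
  .of_bound h.1 (C ^ N) (.of_forall (norm_eigenProd_le hC))

lemma integrable_exp_eigenCount [IsProbabilityMeasure ℙ] [ℙ.IsMulLeftInvariant]
    (hB : IsClosed B) : Integrable (fun U => rexp (eigenCount B U)) ℙ := by
  classical
  have h : Integrable (fun U => (rexp (eigenCount B U) : ℂ)) ℙ := by
    simp only [← eigenProd_ite_exp_one]
    refine (heineIdentity_ite hB _).integrable_eigenProd (C := rexp 1) fun x => ?_
    split_ifs
    · rw [Complex.norm_of_nonneg (Real.exp_nonneg 1)]
    · exact norm_one.trans_le (one_le_exp zero_le_one)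
  exact_mod_cast h.re

lemma integral_exp_eigenCount [IsProbabilityMeasure ℙ] [ℙ.IsMulLeftInvariant] (hB : IsClosed B) :
    ∫ U, rexp (eigenCount B U) ∂ℙ =
      (1 + ((rexp 1 - 1 : ℝ) : ℂ) • toeplitz N (B.indicator 1)).det.re := by
  classical
  have h := (heineIdentity_ite (ℙ := ℙ) hB (rexp 1 : ℂ)).2
  simp only [eigenProd_ite_exp_one] at h
  rw [Complex.ofReal_sub, Complex.ofReal_one, ← toeplitz_ite hB.measurableSet, ← h,
    integral_complex_ofReal, Complex.ofReal_re]

lemma re_trace_toeplitz_indicator (hB : MeasurableSet B) :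
    (toeplitz N (B.indicator 1)).trace.re = N * AddCircle.haarAddCircle.real B := by
  simp only [trace, diag_apply, toeplitz, of_apply, sub_self, fourierCoeff_indicator_zero hB,
    Finset.sum_const, Finset.card_univ, Fintype.card_fin, nsmul_eq_mul, Complex.mul_re,
    Complex.natCast_re, Complex.ofReal_re, Complex.natCast_im, zero_mul, sub_zero]

lemma four_div_pi_sq_le_half : 4 * (1 / π ^ 2) ≤ 1 / 2 := by
  rw [mul_one_div, div_le_div_iff₀ (by positivity) two_pos]
  nlinarith [pi_gt_three]

lemma re_trace_toeplitz_arc_sub_le (hab : a ≤ b) (hb : b ≤ a + 2 * π) :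
    (toeplitz N ((arc a b).indicator 1)).trace.re -
      (toeplitz N ((arc a b).indicator 1) * toeplitz N ((arc a b).indicator 1)).trace.re ≤
        (1 + log N) / 2 := by
  have hB := (isClosed_arc a b).measurableSet
  have hstar (x : AddCircle (2 * π)) :
      star ((arc a b).indicator (1 : AddCircle (2 * π) → ℂ) x) = (arc a b).indicator 1 x := by
    by_cases hx : x ∈ arc a b <;> simp [hx]
  rw [re_trace_toeplitz_indicator hB, re_trace_toeplitz_mul_self hstar]
  calc _ ≤ 4 * (1 / π ^ 2) * harmonic N :=
        mul_sub_sum_sum_le_harmonic (hasSum_sq_norm_fourierCoeff_indicator hB)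
          (fun _ => sq_nonneg _) (by positivity)
          fun _ => sq_norm_fourierCoeff_indicator_arc_le hab hb
    _ ≤ 1 / 2 * (1 + log N) :=
        mul_le_mul four_div_pi_sq_le_half (harmonic_le_one_add_log N)
          (mod_cast Finset.sum_nonneg fun _ _ => by positivity) (by norm_num)
    _ = (1 + log N) / 2 := one_div_mul_eq_div _ _

lemma integral_exp_eigenCount_arc_le [IsProbabilityMeasure ℙ] [ℙ.IsMulLeftInvariant]
    (hab : a ≤ b) (hb : b ≤ a + 2 * π) :
    ∫ U, rexp (eigenCount (arc a b) U) ∂ℙ ≤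
      rexp (N * ((b - a) / (2 * π)) + (1 + log N) / 2) := by
  have hB := (isClosed_arc a b).measurableSet
  rw [integral_exp_eigenCount (isClosed_arc a b)]
  refine (re_det_one_add_smul_le_exp (posSemidef_toeplitz_indicator hB)
    (toeplitz_indicator_compl hB ▸ posSemidef_toeplitz_indicator hB.compl)).trans
    (exp_le_exp.2 (add_le_add (le_of_eq ?_) (re_trace_toeplitz_arc_sub_le hab hb)))
  exact (re_trace_toeplitz_indicator hB).trans (by rw [haarAddCircle_real_arc hab hb])

lemma measureReal_eigenCount_arc_ge_le [IsProbabilityMeasure ℙ] [ℙ.IsMulLeftInvariant]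
    (hab : a ≤ b) (hb : b ≤ a + 2 * π) (x : ℝ) :
    ℙ.real {U | N * ((b - a) / (2 * π)) + x ≤ eigenCount (arc a b) U} ≤
      rexp ((1 + log N) / 2 - x) := by
  refine (ProbabilityTheory.measure_ge_le_exp_mul_mgf (X := fun U => (eigenCount (arc a b) U : ℝ))
    _ zero_le_one ?_).trans ?_
  · simpa only [one_mul] using integrable_exp_eigenCount (isClosed_arc a b)
  simp only [ProbabilityTheory.mgf, one_mul]
  refine (mul_le_mul_of_nonneg_left (integral_exp_eigenCount_arc_le hab hb)
    (Real.exp_nonneg _)).trans_eq ?_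
  rw [← Real.exp_add]
  ring_nf

end ChernoffBound

section MaximalDeviation

open Matrix

variable {N : ℕ} {ℙ : Measure (unitaryGroup (Fin N) ℂ)}

lemma mem_Icc_of_mem_eigenAngles {U : unitaryGroup (Fin N) ℂ} {θ : ℝ} (hθ : θ ∈ eigenAngles N U) :
    θ ∈ Set.Icc 0 (2 * π) := by
  obtain ⟨z, -, rfl⟩ := Multiset.mem_map.1 hθ
  have hlow := Complex.neg_pi_lt_arg z
  have hhigh := Complex.arg_le_pi z
  split_ifs with h
  · exact ⟨h, by linarith⟩
  · exact ⟨by linarith, by linarith⟩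

lemma countAngles_le_eigenCount (U : unitaryGroup (Fin N) ℂ) {A : Set ℝ}
    {B : Set (AddCircle (2 * π))} (h : ∀ θ ∈ A, (θ : AddCircle (2 * π)) ∈ B) :
    countAngles N U A ≤ eigenCount B U := by
  classical
  rw [countAngles, eigenCount, Multiset.countP_eq_card_filter]
  exact Multiset.card_le_card (Multiset.monotone_filter_right _ h)

lemma le_countAngles_add_eigenCount (U : unitaryGroup (Fin N) ℂ) {A : Set ℝ}
    {B : Set (AddCircle (2 * π))}
    (h : ∀ θ ∈ eigenAngles N U, θ ∉ A → (θ : AddCircle (2 * π)) ∈ B) :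
    N ≤ countAngles N U A + eigenCount B U := by
  classical
  rw [countAngles, eigenCount, Multiset.countP_eq_card_filter]
  calc N = ((eigenAngles N U).filter (· ∈ A)).card + ((eigenAngles N U).filter (· ∉ A)).card := by
        rw [← Multiset.card_add, Multiset.filter_add_not, card_eigenAngles]
    _ ≤ _ := Nat.add_le_add_left (Multiset.card_le_card <| Multiset.le_filter.2
        ⟨Multiset.filter_le _ _, fun θ hθ => and_imp.2 (h θ) (Multiset.mem_filter.1 hθ)⟩) _

lemma countFun_le_eigenCount_arc (U : unitaryGroup (Fin N) ℂ) (θ : ℝ) :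
    countFun N U θ ≤ eigenCount (arc 0 θ) U :=
  countAngles_le_eigenCount U fun φ hφ => ⟨φ, hφ, rfl⟩

lemma le_countFun_add_eigenCount_arc (U : unitaryGroup (Fin N) ℂ) (θ : ℝ) :
    N ≤ countFun N U θ + eigenCount (arc θ (2 * π)) U :=
  le_countAngles_add_eigenCount U fun φ hmem hφ =>
    have hIcc := mem_Icc_of_mem_eigenAngles hmem
    ⟨φ, ⟨(not_le.1 fun h => hφ ⟨hIcc.1, h⟩).le, hIcc.2⟩, rfl⟩

lemma exists_lt_abs_of_lt_maxDev (hN : 1 ≤ N) {U : unitaryGroup (Fin N) ℂ} {x : ℝ}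
    (hx : x < maxDev N U) :
    ∃ k ∈ Finset.Icc 1 N, x < |(countFun N U (2 * π * k / N) : ℝ) - k| := by
  have : Nonempty (Finset.Icc 1 N) := ⟨1, Finset.mem_Icc.2 ⟨le_rfl, hN⟩⟩
  obtain ⟨k, hk⟩ := exists_lt_of_lt_ciSup hx
  exact ⟨k, k.2, hk⟩

lemma measureReal_lt_abs_countFun_sub_le [IsProbabilityMeasure ℙ] [ℙ.IsMulLeftInvariant]
    {k : ℕ} (hk : k ∈ Finset.Icc 1 N) (x : ℝ) :
    ℙ.real {U | x < |(countFun N U (2 * π * k / N) : ℝ) - k|} ≤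
      2 * rexp ((1 + log N) / 2 - x) := by
  obtain ⟨hk₁, hkN⟩ := Finset.mem_Icc.1 hk
  have hN : (0 : ℝ) < N := by exact_mod_cast hk₁.trans hkN
  set θ := 2 * π * k / N with hθ
  have hθ₀ : 0 ≤ θ := by positivity
  have hθ₁ : θ ≤ 2 * π := by
    rw [hθ, div_le_iff₀ hN]
    gcongr
  have hmean : N * ((θ - 0) / (2 * π)) = k := by rw [hθ]; field_simp; ring
  have hmean' : N * ((2 * π - θ) / (2 * π)) = N - k := by rw [hθ]; field_simp
  have hsub : {U | x < |(countFun N U θ : ℝ) - k|} ⊆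
      {U | N * ((θ - 0) / (2 * π)) + x ≤ eigenCount (arc 0 θ) U} ∪
        {U | N * ((2 * π - θ) / (2 * π)) + x ≤ eigenCount (arc θ (2 * π)) U} := by
    intro U (hU : x < |_|)
    have hle : (countFun N U θ : ℝ) ≤ eigenCount (arc 0 θ) U := by
      exact_mod_cast countFun_le_eigenCount_arc U θ
    have hge : (N : ℝ) ≤ countFun N U θ + eigenCount (arc θ (2 * π)) U := by
      exact_mod_cast le_countFun_add_eigenCount_arc U θ
    rw [hmean, hmean']
    rcases lt_abs.1 hU with h | h
    · exact Or.inl (by simp only [Set.mem_ofPred_eq]; linarith)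
    · exact Or.inr (by simp only [Set.mem_ofPred_eq]; linarith)
  calc _ ≤ _ := (measureReal_mono hsub).trans (measureReal_union_le _ _)
    _ ≤ rexp ((1 + log N) / 2 - x) + rexp ((1 + log N) / 2 - x) :=
        add_le_add (measureReal_eigenCount_arc_ge_le hθ₀ (by linarith) x)
          (measureReal_eigenCount_arc_ge_le hθ₁ (by linarith) x)
    _ = 2 * rexp ((1 + log N) / 2 - x) := (two_mul _).symm

lemma measureReal_lt_maxDev_le [IsProbabilityMeasure ℙ] [ℙ.IsMulLeftInvariant] (hN : 1 ≤ N)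
    (x : ℝ) : ℙ.real {U | x < maxDev N U} ≤ 2 * N * rexp ((1 + log N) / 2 - x) := by
  have hsub : {U | x < maxDev N U} ⊆
      ⋃ k ∈ Finset.Icc 1 N, {U | x < |(countFun N U (2 * π * k / N) : ℝ) - k|} := fun U hU => by
    simpa only [Set.mem_iUnion, exists_prop] using! exists_lt_abs_of_lt_maxDev hN hU
  calc _ ≤ _ := (measureReal_mono hsub (measure_ne_top _ _)).trans
        (measureReal_biUnion_finset_le _ _)
    _ ≤ ∑ k ∈ Finset.Icc 1 N, 2 * rexp ((1 + log N) / 2 - x) :=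
        Finset.sum_le_sum fun k hk => measureReal_lt_abs_countFun_sub_le hk x
    _ = 2 * N * rexp ((1 + log N) / 2 - x) := by
        rw [Finset.sum_const, Nat.card_Icc, Nat.add_sub_cancel, nsmul_eq_mul]
        ring

end MaximalDeviation

end HaarUnitary

end

theorem max_deviation_tail_bound_general (N : ℕ) (hN : 1 ≤ N)
    (ℙ : Measure (Matrix.unitaryGroup (Fin N) ℂ)) [IsProbabilityMeasure ℙ]
    [ℙ.IsMulLeftInvariant] (x : ℝ) :
    (ℙ {U | x < maxDev N U}).toReal ≤ 2 * N * rexp (-(x / 2)) := by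
  have hN₀ : (1 : ℝ) ≤ N := by exact_mod_cast hN
  rcases le_total (1 + log N) x with hx | hx
  · refine (HaarUnitary.measureReal_lt_maxDev_le hN x).trans ?_
    gcongr
    linarith
  · have hlog : x / 2 ≤ log (2 * N) := by
      rw [log_mul two_ne_zero (by positivity)]
      linarith [log_two_gt_d9, log_nonneg hN₀]
    refine measureReal_le_one.trans ?_
    calc 1 = rexp (log (2 * N)) * rexp (-log (2 * N)) := by
          rw [← Real.exp_add, add_neg_cancel, Real.exp_zero]
      _ ≤ 2 * N * rexp (-(x / 2)) := by
          rw [Real.exp_log (by positivity)]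
          gcongr

/-- For a Haar-distributed `N × N` unitary matrix and `x > 0`,
`P[max_{1 ≤ k ≤ N} |𝒩_{2πk/N} − k| > x] ≤ 2N exp(−min{x²/(4 log(eN)), x/2})`. -/
theorem max_deviation_tail_bound
    (N : ℕ) (hN : 1 ≤ N) (ℙ : Measure (Matrix.unitaryGroup (Fin N) ℂ))
    (hprob : IsProbabilityMeasure ℙ) (hhaar : ℙ.IsHaarMeasure)
    (x : ℝ) (hx : 0 < x) :
    (ℙ {U | x < maxDev N U}).toReal ≤
      2 * N * Real.exp (-(min (x ^ 2 / (4 * Real.log (Real.exp 1 * N))) (x / 2))) := by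
  refine (max_deviation_tail_bound_general N hN ℙ x).trans ?_
  gcongr
  exact min_le_right _ _
end

section
/- Let U be an N × N random unitary matrix distributed according to Haar measure on U(N). Then E[ max_{1 ≤ k ≤ N} |𝒩_{2πk/N} − k| ] ≤ 4 log(eN) + 2/e². -/
open MeasureTheory Real Filter

/-!
Let `S A = Im log det (1 - A)`, with the principal logarithm taken eigenvalue by eigenvalue.
As an eigenvalue crosses `1`, the corresponding argument jumps by `π`, so that
`S (e^{-iθ} U) - S U = π (𝒩_θ - N θ / 2π)`. Under Haar measure `S (e^{-iθ} U)` has the law of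
`S U`, and the maximum over the `N` grid points is bounded by Jensen's inequality and a union bound
on exponential moments.

For the moment generating function of `S`, write `U ∈ U(m + l)` in blocks and let `V ∈ U(m)` act on
the first `m` coordinates. A Schur complement gives
`det (1 - (V ⊕ 1) U) = det (1 - U₂₂) det (1 - V F)`, where `F = U₁₁ + U₁₂ (1 - U₂₂)⁻¹ U₂₁` is again
unitary. If `U` and `V` are independent and Haar distributed, `V F` is Haar distributed and
independent of `U`. For `l = 1` the moment generating function on `U(m + 1)` is therefore the one on
`U(m)` times that of `arg (1 - u)`, where `u` is a diagonal entry of `U`. Since `arg (1 - u)` has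
mean zero, `|arg (1 - u)| ≤ π / 2 * |u|` and `𝔼 |u|² = 1 / (m + 1)`, each step contributes a factor
`exp ((π t / 2)² / (m + 1))`, and these multiply to `exp ((π t / 2)² H_N)`.
-/

open Matrix Topology unitInterval
open scoped Matrix.Norms.L2Operator

variable {m l : Type*} [Fintype m] [DecidableEq m] [Fintype l] [DecidableEq l]

section Roots

variable {K : Type*} [Field K] [IsAlgClosed K]

theorem det_sub_eq_prod_roots (A : Matrix m m K) (x : K) :
    (scalar m x - A).det = (A.charpoly.roots.map fun r => x - r).prod := by
  rw [← A.eval_charpoly, (IsAlgClosed.splits A.charpoly).eval_eq_prod_roots_of_monic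
    A.charpoly_monic]

theorem card_roots_charpoly (A : Matrix m m K) : A.charpoly.roots.card = Fintype.card m := by
  rw [← (IsAlgClosed.splits A.charpoly).natDegree_eq_card_roots, A.charpoly_natDegree_eq_dim]

theorem roots_charpoly_smul (z : K) (A : Matrix m m K) :
    (z • A).charpoly.roots = A.charpoly.roots.map (z * ·) := by
  suffices h : (z • A).charpoly
      = ((A.charpoly.roots.map (z * ·)).map fun r => Polynomial.X - Polynomial.C r).prod by
    rw [h, Polynomial.roots_multiset_prod_X_sub_C]
  have := IsAlgClosed.instInfinite (K := K)
  refine Polynomial.funext fun x => ?_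
  rw [eval_charpoly, Polynomial.eval_multiset_prod]
  simp only [Multiset.map_map, Function.comp_def, Polynomial.eval_sub, Polynomial.eval_X,
    Polynomial.eval_C]
  rcases eq_or_ne z 0 with rfl | hz
  · simp [card_roots_charpoly]
  · have hscale : scalar m x - z • A = z • (scalar m (z⁻¹ * x) - A) := by
      rw [smul_sub, scalar_apply, scalar_apply, ← diagonal_smul, Pi.smul_def, smul_eq_mul,
        mul_inv_cancel_left₀ hz]
    rw [hscale, det_smul, det_sub_eq_prod_roots, ← card_roots_charpoly A,
      ← Multiset.prod_replicate, ← Multiset.map_const', ← Multiset.prod_map_mul]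
    simp only [mul_sub, mul_inv_cancel_left₀ hz]

theorem det_one_sub_eq_prod_roots (A : Matrix m m K) :
    (1 - A).det = (A.charpoly.roots.map fun r => 1 - r).prod := by
  simpa using det_sub_eq_prod_roots A 1

theorem det_one_sub_ne_zero_iff {A : Matrix m m K} :
    (1 - A).det ≠ 0 ↔ ∀ r ∈ A.charpoly.roots, 1 - r ≠ 0 := by
  simp [det_one_sub_eq_prod_roots, Multiset.prod_eq_zero_iff, -Polynomial.mem_roots']

end Roots

noncomputable section LogDet

/-- The branch of `log det (1 - A)` obtained by adding up the principal logarithms of `1 - r`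
over the eigenvalues `r` of `A`, with multiplicity. -/
def logDetOneSub (A : Matrix m m ℂ) : ℂ :=
  (A.charpoly.roots.map fun r => Complex.log (1 - r)).sum

theorem logDetOneSub_smul (z : ℂ) (A : Matrix m m ℂ) :
    logDetOneSub (z • A) = (A.charpoly.roots.map fun r => Complex.log (1 - z * r)).sum := by
  simp [logDetOneSub, roots_charpoly_smul]

theorem logDetOneSub_mul_comm (A B : Matrix m m ℂ) :
    logDetOneSub (A * B) = logDetOneSub (B * A) := by
  rw [logDetOneSub, charpoly_mul_comm, logDetOneSub]

theorem logDetOneSub_reindex (e : m ≃ l) (A : Matrix m m ℂ) :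
    logDetOneSub (reindex e e A) = logDetOneSub A := by
  rw [logDetOneSub, charpoly_reindex, logDetOneSub]

theorem logDetOneSub_fromBlocks_zero₂₁ (A : Matrix m m ℂ) (B : Matrix m l ℂ) (D : Matrix l l ℂ) :
    logDetOneSub (fromBlocks A B 0 D) = logDetOneSub A + logDetOneSub D := by
  rw [logDetOneSub, charpoly_fromBlocks_zero₂₁,
    Polynomial.roots_mul (mul_ne_zero A.charpoly_monic.ne_zero D.charpoly_monic.ne_zero),
    Multiset.map_add, Multiset.sum_add, logDetOneSub, logDetOneSub]

theorem logDetOneSub_zero : logDetOneSub (0 : Matrix m m ℂ) = 0 := by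
  simpa using logDetOneSub_smul 0 (0 : Matrix m m ℂ)

theorem logDetOneSub_of_isEmpty [IsEmpty m] (A : Matrix m m ℂ) : logDetOneSub A = 0 := by
  simp [logDetOneSub]

theorem logDetOneSub_of_unique [Unique m] (A : Matrix m m ℂ) :
    logDetOneSub A = Complex.log (1 - A default default) := by
  simp [logDetOneSub, charpoly, charmatrix, det_unique]

theorem exp_logDetOneSub {A : Matrix m m ℂ} (hA : (1 - A).det ≠ 0) :
    Complex.exp (logDetOneSub A) = (1 - A).det := by
  rw [logDetOneSub, Complex.exp_multiset_sum, Multiset.map_map, det_one_sub_eq_prod_roots]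
  exact congrArg Multiset.prod
    (Multiset.map_congr rfl fun r hr => Complex.exp_log (det_one_sub_ne_zero_iff.1 hA r hr))

/-- The matrices without eigenvalues in `[1, ∞)`: the domain on which `logDetOneSub` is a
continuous logarithm of `det (1 - A)`. -/
def logDetOneSubDomain (m : Type*) [Fintype m] [DecidableEq m] : Set (Matrix m m ℂ) :=
  {A | ∀ r ∈ A.charpoly.roots, 1 - r ∈ Complex.slitPlane}

theorem mem_logDetOneSubDomain_of_norm_le_one {A : Matrix m m ℂ} (hA : ‖A‖ ≤ 1)
    (hdet : (1 - A).det ≠ 0) : A ∈ logDetOneSubDomain m := by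
  intro r hr
  have hspec : r ∈ spectrum ℂ A :=
    mem_spectrum_iff_isRoot_charpoly.2 (Polynomial.isRoot_of_mem_roots hr)
  have hr1 : r ≠ 1 := fun h => det_one_sub_ne_zero_iff.1 hdet r hr (sub_eq_zero.2 h.symm)
  have : Nontrivial (Matrix m m ℂ) :=
    not_subsingleton_iff_nontrivial.1 fun _ => by simp [spectrum.of_subsingleton] at hspec
  have hre : r.re ≤ 1 :=
    (Complex.re_le_norm r).trans ((spectrum.norm_le_norm_of_mem hspec).trans hA)
  rw [Complex.mem_slitPlane_iff, Complex.sub_re, Complex.one_re, sub_pos]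
  refine hre.lt_or_eq.imp_right fun hre1 him => hr1 (Complex.ext hre1 ?_)
  simpa using him

theorem one_sub_mul_mem_slitPlane {z : ℂ} (hz : 1 - z ∈ Complex.slitPlane) (t : I) :
    1 - (t : ℝ) * z ∈ Complex.slitPlane := by
  have := Complex.starConvex_one_slitPlane hz (sub_nonneg.2 t.2.2) t.2.1 (sub_add_cancel 1 (t : ℝ))
  convert this using 1
  simp only [Complex.real_smul]
  push_cast
  ring

theorem smul_mem_logDetOneSubDomain {A : Matrix m m ℂ} (hA : A ∈ logDetOneSubDomain m) (t : I) :
    ((t : ℝ) : ℂ) • A ∈ logDetOneSubDomain m := by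
  intro s hs
  rw [roots_charpoly_smul] at hs
  obtain ⟨r, hr, rfl⟩ := Multiset.mem_map.1 hs
  exact one_sub_mul_mem_slitPlane (hA r hr) t

theorem det_one_sub_ne_zero {A : Matrix m m ℂ} (hA : A ∈ logDetOneSubDomain m) :
    (1 - A).det ≠ 0 :=
  det_one_sub_ne_zero_iff.2 fun r hr => Complex.slitPlane_ne_zero (hA r hr)

theorem det_one_sub_smul_ne_zero {A : Matrix m m ℂ} (hA : A ∈ logDetOneSubDomain m) (t : I) :
    (1 - ((t : ℝ) : ℂ) • A).det ≠ 0 :=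
  det_one_sub_ne_zero (smul_mem_logDetOneSubDomain hA t)

theorem continuousOn_logDetOneSub : ContinuousOn logDetOneSub (logDetOneSubDomain m) := by
  -- The eigenvalues need not be followed as `A` varies: for fixed `A` the path
  -- `t ↦ logDetOneSub (t • A)` lifts `t ↦ det (1 - t • A)` through `exp` from the value `0`, and
  -- such lifts depend continuously on `A`.
  rw [continuousOn_iff_continuous_domRestrict]
  have hlift := Complex.isCoveringMap_exp.isLocalHomeomorph.continuous_lift
    Complex.isCoveringMap_exp.isSeparatedMap
    (A := logDetOneSubDomain m)
    ⟨fun p => ⟨(1 - ((p.1 : ℝ) : ℂ) • (p.2 : Matrix m m ℂ)).det,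
      det_one_sub_smul_ne_zero p.2.2 p.1⟩, by fun_prop⟩
    (g := fun p => logDetOneSub (((p.1 : ℝ) : ℂ) • (p.2 : Matrix m m ℂ)))
    (funext fun p => Subtype.ext (exp_logDetOneSub (det_one_sub_smul_ne_zero p.2.2 p.1)))
    (by simpa [logDetOneSub_zero] using continuous_const)
    (fun A => ?_)
  · simpa [Function.comp_def, Set.domRestrict_def] using
      hlift.comp (Continuous.prodMk_right (1 : I))
  · simp only [logDetOneSub_smul]
    refine continuous_multiset_sum _ fun r hr => Continuous.clog (by fun_prop) fun t => ?_
    exact one_sub_mul_mem_slitPlane (A.2 r hr) t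

end LogDet

noncomputable section Feedback

section CommRing

variable {R : Type*} [CommRing R]

/-- The `m × m` matrix obtained from `U` by feeding the `l`-components of its output back into its
input. Equivalently, `1 - feedback U` is the Schur complement of the `l × l` block of `1 - U`. -/
def feedback (U : Matrix (m ⊕ l) (m ⊕ l) R) : Matrix m m R :=
  U.toBlocks₁₁ + U.toBlocks₁₂ * (1 - U.toBlocks₂₂)⁻¹ * U.toBlocks₂₁

omit [DecidableEq m] in
theorem toBlocks₂₂_fromBlocks_one_mul (V : Matrix m m R) (U : Matrix (m ⊕ l) (m ⊕ l) R) :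
    (fromBlocks V 0 0 1 * U).toBlocks₂₂ = U.toBlocks₂₂ := by
  rw [← U.fromBlocks_toBlocks, fromBlocks_multiply]
  simp

omit [DecidableEq m] in
theorem feedback_fromBlocks_one_mul (V : Matrix m m R) (U : Matrix (m ⊕ l) (m ⊕ l) R) :
    feedback (fromBlocks V 0 0 1 * U) = V * feedback U := by
  rw [← U.fromBlocks_toBlocks, fromBlocks_multiply]
  simp [feedback, Matrix.mul_add, Matrix.mul_assoc]

theorem det_one_sub_mul_fromBlocks_smul_one {U : Matrix (m ⊕ l) (m ⊕ l) R}
    (hU : IsUnit (1 - U.toBlocks₂₂).det) (s : R) :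
    (1 - U * fromBlocks (s • 1) 0 0 1).det
      = (1 - U.toBlocks₂₂).det * (1 - s • feedback U).det := by
  have := invertibleOfIsUnitDet _ hU
  have hblocks : 1 - U * fromBlocks (s • 1) 0 0 1
      = fromBlocks (1 - s • U.toBlocks₁₁) (-U.toBlocks₁₂) (-(s • U.toBlocks₂₁))
        (1 - U.toBlocks₂₂) := by
    nth_rw 1 [← U.fromBlocks_toBlocks]
    rw [fromBlocks_multiply, ← fromBlocks_one, sub_eq_add_neg, fromBlocks_neg, fromBlocks_add]
    simp [sub_eq_add_neg]
  rw [hblocks, det_fromBlocks₂₂, invOf_eq_nonsing_inv, feedback, smul_add, Matrix.neg_mul,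
    Matrix.neg_mul, Matrix.mul_neg, neg_neg, Matrix.mul_smul, sub_sub]

/-- Closing the feedback loop: for the input `1`, the signal `(1 - U₂₂)⁻¹ U₂₁` in the
`l`-components is a fixed point. -/
theorem mul_fromRows_one_eq {U : Matrix (m ⊕ l) (m ⊕ l) R}
    (hU : IsUnit (1 - U.toBlocks₂₂).det) :
    (U * fromRows (1 : Matrix m m R) ((1 - U.toBlocks₂₂)⁻¹ * U.toBlocks₂₁) : Matrix (m ⊕ l) m R)
      = fromRows (feedback U) ((1 - U.toBlocks₂₂)⁻¹ * U.toBlocks₂₁) := by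
  set X := (1 - U.toBlocks₂₂)⁻¹ * U.toBlocks₂₁
  have hfix : U.toBlocks₂₁ + U.toBlocks₂₂ * X = X := by
    rw [← sub_eq_zero, add_sub_assoc, ← neg_sub X, ← sub_eq_add_neg, sub_eq_zero]
    simpa only [Matrix.sub_mul, Matrix.one_mul] using
      (mul_nonsing_inv_cancel_left _ U.toBlocks₂₁ hU).symm
  nth_rw 1 [← U.fromBlocks_toBlocks]
  rw [fromBlocks_mul_fromRows, Matrix.mul_one, Matrix.mul_one, hfix, feedback, Matrix.mul_assoc]

theorem feedback_mem_unitaryGroup [StarRing R] {U : Matrix (m ⊕ l) (m ⊕ l) R}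
    (hU : U ∈ unitaryGroup (m ⊕ l) R) (hdet : IsUnit (1 - U.toBlocks₂₂).det) :
    feedback U ∈ unitaryGroup m R := by
  set X := (1 - U.toBlocks₂₂)⁻¹ * U.toBlocks₂₁
  have hgram (Y : Matrix m m R) : (fromRows Y X)ᴴ * fromRows Y X = Yᴴ * Y + Xᴴ * X := by
    rw [conjTranspose_fromRows_eq_fromCols_conjTranspose, fromCols_mul_fromRows]
  have hisom (Z : Matrix (m ⊕ l) m R) : (U * Z)ᴴ * (U * Z) = Zᴴ * Z := by
    rw [conjTranspose_mul, Matrix.mul_assoc, ← Matrix.mul_assoc Uᴴ, ← star_eq_conjTranspose U,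
      mem_unitaryGroup_iff'.1 hU, Matrix.one_mul]
  have := hisom (fromRows 1 X)
  rw [mul_fromRows_one_eq hdet, hgram, hgram, add_left_inj, conjTranspose_one, Matrix.one_mul]
    at this
  rwa [mem_unitaryGroup_iff', star_eq_conjTranspose]

end CommRing

open scoped ComplexOrder in
theorem det_one_sub_toBlocks₂₂_ne_zero {U : Matrix (m ⊕ l) (m ⊕ l) ℂ}
    (hU : U ∈ unitaryGroup (m ⊕ l) ℂ) (hdet : (1 - U).det ≠ 0) :
    (1 - U.toBlocks₂₂).det ≠ 0 := by
  intro h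
  obtain ⟨x, hx, hfix⟩ := exists_mulVec_eq_zero_iff.2 h
  rw [sub_mulVec, one_mulVec, sub_eq_zero, eq_comm] at hfix
  let v : m ⊕ l → ℂ := Sum.elim 0 x
  have hUx : U *ᵥ v = Sum.elim (U.toBlocks₁₂ *ᵥ x) x := by
    nth_rw 1 [← U.fromBlocks_toBlocks]
    simp [v, fromBlocks_mulVec, hfix]
  have hnorm : star (U *ᵥ v) ⬝ᵥ (U *ᵥ v) = star v ⬝ᵥ v := by
    rw [star_mulVec, dotProduct_mulVec, vecMul_vecMul, ← star_eq_conjTranspose,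
      mem_unitaryGroup_iff'.1 hU, vecMul_one]
  have hzero : U.toBlocks₁₂ *ᵥ x = 0 := by
    rw [← dotProduct_star_self_eq_zero, dotProduct_comm]
    simpa [v, hUx, Function.star_sumElim, sumElim_dotProduct_sumElim] using hnorm
  refine hdet (exists_mulVec_eq_zero_iff.1 ⟨v, fun h0 => hx ?_, ?_⟩)
  · funext i; exact congrFun h0 (Sum.inr i)
  · rw [sub_mulVec, one_mulVec, hUx, hzero, sub_self]

theorem norm_le_one_of_mem_unitaryGroup {U : Matrix m m ℂ} (hU : U ∈ unitaryGroup m ℂ) :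
    ‖U‖ ≤ 1 := by
  nontriviality Matrix m m ℂ
  exact (CStarRing.norm_of_mem_unitary hU).le

theorem norm_fromBlocks_smul_one_le_one (t : I) :
    ‖(fromBlocks (((t : ℝ) : ℂ) • 1) 0 0 1 : Matrix (m ⊕ l) (m ⊕ l) ℂ)‖ ≤ 1 := by
  have : (fromBlocks (((t : ℝ) : ℂ) • 1) 0 0 1 : Matrix (m ⊕ l) (m ⊕ l) ℂ)
      = diagonal (Sum.elim (fun _ => ((t : ℝ) : ℂ)) fun _ => 1) := by
    rw [← fromBlocks_diagonal, diagonal_one, smul_one_eq_diagonal]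
  rw [this, l2_opNorm_diagonal, pi_norm_le_iff_of_nonneg zero_le_one]
  rintro (i | i)
  · simpa [abs_of_nonneg t.2.1] using t.2.2
  · simp

/-- Both sides are logarithms of the same determinant when the input and output of `feedback U`
are damped by a factor `t ∈ [0, 1]`, and they agree at `t = 0`. -/
theorem logDetOneSub_eq_add_feedback {U : Matrix (m ⊕ l) (m ⊕ l) ℂ}
    (hU : U ∈ unitaryGroup (m ⊕ l) ℂ) (hdet : (1 - U).det ≠ 0) :
    logDetOneSub U = logDetOneSub U.toBlocks₂₂ + logDetOneSub (feedback U) := by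
  set D := U.toBlocks₂₂
  set W := feedback U
  let P (t : I) : Matrix (m ⊕ l) (m ⊕ l) ℂ := U * fromBlocks (((t : ℝ) : ℂ) • 1) 0 0 1
  have hD : (1 - D).det ≠ 0 := det_one_sub_toBlocks₂₂_ne_zero hU hdet
  have hdetP (t : I) : (1 - P t).det = (1 - D).det * (1 - ((t : ℝ) : ℂ) • W).det :=
    det_one_sub_mul_fromBlocks_smul_one hD.isUnit _
  have hP1 : P 1 = U := by simp [P, fromBlocks_one]
  have hW : W ∈ logDetOneSubDomain m :=
    mem_logDetOneSubDomain_of_norm_le_one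
      (norm_le_one_of_mem_unitaryGroup (feedback_mem_unitaryGroup hU hD.isUnit))
      fun h => hdet (by simpa [hP1, h] using hdetP 1)
  have hWdet := det_one_sub_smul_ne_zero hW
  have hPdet (t : I) : (1 - P t).det ≠ 0 := hdetP t ▸ mul_ne_zero hD (hWdet t)
  have hP (t : I) : P t ∈ logDetOneSubDomain (m ⊕ l) :=
    mem_logDetOneSubDomain_of_norm_le_one
      ((norm_mul_le _ _).trans (mul_le_one₀ (norm_le_one_of_mem_unitaryGroup hU) (norm_nonneg _)
        (norm_fromBlocks_smul_one_le_one t))) (hPdet t)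
  have heq := Complex.isCoveringMap_exp.eq_of_comp_eq (A := I)
    (g₁ := fun t => logDetOneSub (P t))
    (g₂ := fun t => logDetOneSub D + logDetOneSub (((t : ℝ) : ℂ) • W))
    (continuousOn_logDetOneSub.comp_continuous (by fun_prop) hP)
    (continuous_const.add (continuousOn_logDetOneSub.comp_continuous (by fun_prop)
      (smul_mem_logDetOneSubDomain hW)))
    (funext fun t => Subtype.ext (by
      simp only [Function.comp_apply, Complex.exp_add, exp_logDetOneSub (hPdet t),
        exp_logDetOneSub hD, exp_logDetOneSub (hWdet t), hdetP])) 0 (by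
      simp only [P]
      rw [← U.fromBlocks_toBlocks, fromBlocks_multiply]
      simp [logDetOneSub_fromBlocks_zero₂₁, logDetOneSub_zero, D])
  simpa [hP1] using congrFun heq 1

end Feedback

noncomputable section Haar

instance instCompactSpaceUnitaryGroup : CompactSpace (unitaryGroup m ℂ) := by
  have hsub : (unitaryGroup m ℂ : Set (Matrix m m ℂ))
      ⊆ Set.pi Set.univ fun _ => Set.pi Set.univ fun _ => Metric.closedBall (0 : ℂ) 1 :=
    fun U hU i _ j _ => by simpa using entry_norm_bound_of_unitary hU i j
  exact isCompact_iff_compactSpace.1 (IsCompact.of_isClosed_subset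
    (isCompact_univ_pi fun _ => isCompact_univ_pi fun _ => isCompact_closedBall _ _)
    isClosed_unitary hsub)

instance instSecondCountableTopologyUnitaryGroup :
    SecondCountableTopology (unitaryGroup m ℂ) := by
  have : SecondCountableTopology (Matrix m m ℂ) :=
    inferInstanceAs (SecondCountableTopology (m → m → ℂ))
  exact Topology.IsEmbedding.subtypeVal.secondCountableTopology

/-- The unitary matrix `z • 1`, by which left translation rotates the spectrum. -/
def scalarUnitary (m : Type*) [Fintype m] [DecidableEq m] (z : Circle) : unitaryGroup m ℂ :=
  ⟨(z : ℂ) • 1, Unitary.smul_mem_of_mem (by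
    simp [Unitary.mem_iff, ← starRingEnd_apply, Complex.conj_mul', Complex.mul_conj',
      Circle.norm_coe]) (one_mem _)⟩

theorem coe_scalarUnitary_mul (z : Circle) (U : unitaryGroup m ℂ) :
    ((scalarUnitary m z * U : unitaryGroup m ℂ) : Matrix m m ℂ) = (z : ℂ) • U.1 := by
  rw [Matrix.UnitaryGroup.mul_val, scalarUnitary, smul_mul_assoc, one_mul]

/-- The unitary matrix acting as `V` on the `m`-components and trivially on the `l`-components. -/
def blockUnitary (l : Type*) [Fintype l] [DecidableEq l] (V : unitaryGroup m ℂ) :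
    unitaryGroup (m ⊕ l) ℂ :=
  ⟨fromBlocks (V : Matrix m m ℂ) 0 0 1, by
    have := mem_unitaryGroup_iff.1 V.2
    rw [star_eq_conjTranspose] at this
    rw [mem_unitaryGroup_iff, star_eq_conjTranspose, fromBlocks_conjTranspose, fromBlocks_multiply]
    simp [this]⟩

theorem continuous_blockUnitary : Continuous (blockUnitary l : unitaryGroup m ℂ → _) :=
  Continuous.subtype_mk
    (continuous_subtype_val.matrix_fromBlocks continuous_const continuous_const continuous_const) _

theorem finite_setOf_det_one_sub_smul_eq_zero (A : Matrix m m ℂ) :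
    {z : Circle | (1 - (z : ℂ) • A).det = 0}.Finite := by
  refine (A.charpoly.roots.toFinset.finite_toSet.preimage
    (f := fun z : Circle => ((z⁻¹ : Circle) : ℂ))
    (Circle.coe_injective.comp (inv_injective (G := Circle))).injOn).subset fun z hz => ?_
  rw [Set.mem_ofPred_eq, det_one_sub_eq_prod_roots, roots_charpoly_smul, Multiset.map_map,
    Multiset.prod_eq_zero_iff, Multiset.mem_map] at hz
  obtain ⟨r, hr, hzr⟩ := hz
  simpa [Circle.coe_inv, inv_eq_of_mul_eq_one_right (sub_eq_zero.1 hzr).symm,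
    -Polynomial.mem_roots'] using hr

/-- Entrywise complex conjugation. -/
def mapConj (m : Type*) [Fintype m] : Matrix m m ℂ ≃⋆* Matrix m m ℂ where
  toFun A := A.map star
  invFun A := A.map star
  left_inv A := by ext; simp
  right_inv A := by ext; simp
  map_mul' A B := by ext; simp [Matrix.mul_apply]
  map_star' A := rfl

/-- Relabelling of rows and columns. -/
def reindexStarMulEquiv (e : m ≃ l) : Matrix m m ℂ ≃⋆* Matrix l l ℂ where
  toEquiv := reindex e e
  map_mul' A B := by simp [submatrix_mul_equiv]
  map_star' A := rfl

variable [MeasurableSpace (unitaryGroup m ℂ)] [BorelSpace (unitaryGroup m ℂ)]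

theorem ae_det_one_sub_ne_zero (μ : Measure (unitaryGroup m ℂ)) [SFinite μ]
    [μ.IsMulLeftInvariant] : ∀ᵐ U : unitaryGroup m ℂ ∂μ, (1 - U.1).det ≠ 0 := by
  borelize Circle
  have : Nontrivial Circle := ⟨1, -1, (Circle.neg_ne_self 1).symm⟩
  have hcont : Continuous fun p : Circle × unitaryGroup m ℂ =>
      (1 - (p.1 : ℂ) • p.2.1).det := by fun_prop
  have hnull : ∀ᵐ z : Circle ∂Measure.haar, ∀ᵐ U : unitaryGroup m ℂ ∂μ,
      (1 - (z : ℂ) • U.1).det ≠ 0 := by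
    rw [Measure.ae_ae_comm
      (p := fun (z : Circle) (U : unitaryGroup m ℂ) => (1 - (z : ℂ) • U.1).det ≠ 0)
      (hcont.measurable (measurableSet_singleton 0).compl)]
    exact ae_of_all _ fun U => measure_eq_zero_iff_ae_notMem.1
      ((finite_setOf_det_one_sub_smul_eq_zero U.1).measure_zero Measure.haar)
  obtain ⟨z, hz⟩ := hnull.exists
  have := (measurePreserving_mul_left μ (scalarUnitary m z⁻¹)).quasiMeasurePreserving.ae hz
  simpa only [coe_scalarUnitary_mul, smul_smul, ← Circle.coe_mul, mul_inv_cancel, Circle.coe_one,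
    one_smul] using this

theorem measurePreserving_unitaryMapEquiv
    [MeasurableSpace (unitaryGroup l ℂ)] [BorelSpace (unitaryGroup l ℂ)]
    {μ : Measure (unitaryGroup m ℂ)} {ν : Measure (unitaryGroup l ℂ)}
    [IsProbabilityMeasure μ] [IsProbabilityMeasure ν]
    [μ.IsHaarMeasure] [ν.IsHaarMeasure] {f : Matrix m m ℂ ≃⋆* Matrix l l ℂ} (hf : Continuous f) :
    MeasurePreserving (Unitary.mapEquiv f) μ ν :=
  MonoidHom.measurePreserving (f := (Unitary.mapEquiv f : unitaryGroup m ℂ →* unitaryGroup l ℂ))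
    ((hf.comp continuous_subtype_val).subtype_mk _) (Unitary.mapEquiv f).surjective (by simp)

theorem measurePreserving_blockUnitary_mul
    [MeasurableSpace (unitaryGroup (m ⊕ l) ℂ)] [BorelSpace (unitaryGroup (m ⊕ l) ℂ)]
    (ν : Measure (unitaryGroup m ℂ)) [IsProbabilityMeasure ν]
    (μ : Measure (unitaryGroup (m ⊕ l) ℂ)) [SFinite μ] [μ.IsMulLeftInvariant] :
    MeasurePreserving
      (fun p : unitaryGroup m ℂ × unitaryGroup (m ⊕ l) ℂ => blockUnitary l p.1 * p.2)
      (ν.prod μ) μ :=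
  measurePreserving_snd.comp <| (MeasurePreserving.id ν).skew_product
    (((continuous_blockUnitary.comp continuous_fst).mul continuous_snd).measurable)
    (ae_of_all _ fun V => map_mul_left_eq_self μ (blockUnitary l V))

end Haar

noncomputable section Moments

open ProbabilityTheory

/-- The branch of `arg det (1 - A)` given by the imaginary part of `logDetOneSub A`. -/
def argDetOneSub (A : Matrix m m ℂ) : ℝ :=
  (logDetOneSub A).im

theorem argDetOneSub_smul (z : ℂ) (A : Matrix m m ℂ) :
    argDetOneSub (z • A) = (A.charpoly.roots.map fun r => (1 - z * r).arg).sum := by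
  rw [argDetOneSub, logDetOneSub_smul, ← Complex.coe_imAddGroupHom, map_multiset_sum,
    Multiset.map_map]
  simp [Complex.log_im]

theorem abs_argDetOneSub_le (A : Matrix m m ℂ) : |argDetOneSub A| ≤ Fintype.card m * π := by
  rw [← one_smul ℂ A, argDetOneSub_smul]
  refine Multiset.abs_sum_le_sum_abs.trans ((Multiset.sum_le_card_nsmul _ π ?_).trans_eq ?_)
  · simp only [Multiset.mem_map]
    rintro _ ⟨_, ⟨r, -, rfl⟩, rfl⟩
    exact Complex.abs_arg_le_pi _
  · simp [card_roots_charpoly]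

theorem argDetOneSub_blockUnitary_mul {V : unitaryGroup m ℂ} {U : unitaryGroup (m ⊕ l) ℂ}
    (hdet : (1 - (blockUnitary l V * U).1).det ≠ 0) :
    argDetOneSub (blockUnitary l V * U).1
      = argDetOneSub U.1.toBlocks₂₂ + argDetOneSub (V.1 * feedback U.1) := by
  rw [argDetOneSub, logDetOneSub_eq_add_feedback (blockUnitary l V * U).2 hdet]
  simp only [Matrix.UnitaryGroup.mul_val, blockUnitary, toBlocks₂₂_fromBlocks_one_mul,
    feedback_fromBlocks_one_mul, argDetOneSub, Complex.add_im]

variable [MeasurableSpace (unitaryGroup m ℂ)] [BorelSpace (unitaryGroup m ℂ)]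

theorem aemeasurable_argDetOneSub (μ : Measure (unitaryGroup m ℂ)) [SFinite μ]
    [μ.IsMulLeftInvariant] :
    AEMeasurable (fun U : unitaryGroup m ℂ => argDetOneSub U.1) μ := by
  have hcont : ContinuousOn (fun U : unitaryGroup m ℂ => argDetOneSub U.1)
      {U | (1 - U.1).det ≠ 0} :=
    Complex.continuous_im.comp_continuousOn <| continuousOn_logDetOneSub.comp
      continuous_subtype_val.continuousOn fun U hU =>
        mem_logDetOneSubDomain_of_norm_le_one (norm_le_one_of_mem_unitaryGroup U.2) hU
  have hdet : Continuous fun U : unitaryGroup m ℂ => (1 - U.1).det := by fun_prop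
  rw [← Measure.restrict_eq_self_of_ae_mem (ae_det_one_sub_ne_zero μ)]
  exact hcont.aemeasurable (isOpen_ne.preimage hdet).measurableSet

theorem integrable_exp_mul_argDetOneSub (μ : Measure (unitaryGroup m ℂ)) [IsFiniteMeasure μ]
    [μ.IsMulLeftInvariant] (t : ℝ) :
    Integrable (fun U : unitaryGroup m ℂ => exp (t * argDetOneSub U.1)) μ :=
  integrable_exp_mul_of_mem_Icc (aemeasurable_argDetOneSub μ)
    (ae_of_all _ fun _ => abs_le.1 (abs_argDetOneSub_le _))

theorem mgf_argDetOneSub_mul_right (ν : Measure (unitaryGroup m ℂ)) [ν.IsMulLeftInvariant]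
    (W : unitaryGroup m ℂ) (t : ℝ) :
    mgf (fun V : unitaryGroup m ℂ => argDetOneSub (V.1 * W.1)) ν t
      = mgf (fun V : unitaryGroup m ℂ => argDetOneSub V.1) ν t := by
  simp only [argDetOneSub, logDetOneSub_mul_comm _ W.1]
  exact integral_mul_left_eq_self (fun V : unitaryGroup m ℂ => exp (t * argDetOneSub V.1)) W

theorem mgf_argDetOneSub_eq_mul
    [MeasurableSpace (unitaryGroup (m ⊕ l) ℂ)] [BorelSpace (unitaryGroup (m ⊕ l) ℂ)]
    (μ : Measure (unitaryGroup (m ⊕ l) ℂ)) [IsFiniteMeasure μ] [μ.IsMulLeftInvariant]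
    (ν : Measure (unitaryGroup m ℂ)) [IsProbabilityMeasure ν] [ν.IsMulLeftInvariant] (t : ℝ) :
    mgf (fun U : unitaryGroup (m ⊕ l) ℂ => argDetOneSub U.1) μ t
      = mgf (fun U : unitaryGroup (m ⊕ l) ℂ => argDetOneSub U.1.toBlocks₂₂) μ t
        * mgf (fun V : unitaryGroup m ℂ => argDetOneSub V.1) ν t := by
  have hpres := measurePreserving_blockUnitary_mul (l := l) ν μ
  have hint := integrable_exp_mul_argDetOneSub μ t
  have hdet : ∀ᵐ U : unitaryGroup (m ⊕ l) ℂ ∂μ, ∀ᵐ V : unitaryGroup m ℂ ∂ν,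
      (1 - (blockUnitary l V * U).1).det ≠ 0 :=
    Measure.ae_ae_of_ae_prod <| Measure.measurePreserving_swap.quasiMeasurePreserving.ae <|
      hpres.quasiMeasurePreserving.ae (ae_det_one_sub_ne_zero μ)
  calc mgf (fun U : unitaryGroup (m ⊕ l) ℂ => argDetOneSub U.1) μ t
    _ = ∫ p, exp (t * argDetOneSub (blockUnitary l p.1 * p.2).1) ∂ν.prod μ := by
      rw [mgf]
      nth_rw 1 [← hpres.map_eq]
      exact integral_map hpres.aemeasurable (by rw [hpres.map_eq]; exact hint.aestronglyMeasurable)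
    _ = ∫ U, ∫ V, exp (t * argDetOneSub (blockUnitary l V * U).1) ∂ν ∂μ :=
      integral_prod_symm _ (hpres.integrable_comp_of_integrable hint)
    _ = ∫ U : unitaryGroup (m ⊕ l) ℂ, exp (t * argDetOneSub U.1.toBlocks₂₂)
          * mgf (fun V : unitaryGroup m ℂ => argDetOneSub V.1) ν t ∂μ := by
      refine integral_congr_ae ?_
      filter_upwards [hdet, ae_det_one_sub_ne_zero μ] with U hVU hU
      let W : unitaryGroup m ℂ := ⟨feedback U.1, feedback_mem_unitaryGroup U.2
        (det_one_sub_toBlocks₂₂_ne_zero U.2 hU).isUnit⟩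
      rw [← mgf_argDetOneSub_mul_right ν W, ← mgf_const_add]
      exact mgf_congr (hVU.mono fun V => argDetOneSub_blockUnitary_mul)
    _ = _ := integral_mul_const _ _

end Moments

section Entries

open ProbabilityTheory

theorem mgf_le_exp_of_abs_mul_le_one {Ω : Type*} [MeasurableSpace Ω] {μ : Measure Ω}
    [IsProbabilityMeasure μ] {X : Ω → ℝ} {C t : ℝ} (hX : AEMeasurable X μ)
    (hXC : ∀ᵐ ω ∂μ, |X ω| ≤ C) (hmean : ∫ ω, X ω ∂μ = 0) (ht : |t| * C ≤ 1) :
    mgf X μ t ≤ exp (t ^ 2 * ∫ ω, X ω ^ 2 ∂μ) := by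
  have hXint : Integrable X μ := .of_bound hX.aestronglyMeasurable C hXC
  have hX2int : Integrable (fun ω => X ω ^ 2) μ :=
    .of_bound (hX.pow_const 2).aestronglyMeasurable (C ^ 2) <| hXC.mono fun ω hω => by
      simpa using pow_le_pow_left₀ (abs_nonneg _) hω 2
  have hexp : ∀ᵐ ω ∂μ, exp (t * X ω) ≤ 1 + t * X ω + t ^ 2 * X ω ^ 2 := hXC.mono fun ω hω => by
    have htX : |t * X ω| ≤ 1 :=
      (abs_mul _ _).trans_le ((mul_le_mul_of_nonneg_left hω (abs_nonneg t)).trans ht)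
    linarith [(abs_le.1 (abs_exp_sub_one_sub_id_le htX)).2, mul_pow t (X ω) 2]
  calc mgf X μ t
    _ ≤ ∫ ω, (1 + t * X ω + t ^ 2 * X ω ^ 2) ∂μ :=
      integral_mono_ae (integrable_exp_mul_of_mem_Icc hX (hXC.mono fun _ => abs_le.1))
        (((integrable_const 1).add (hXint.const_mul t)).add (hX2int.const_mul _)) hexp
    _ = 1 + t ^ 2 * ∫ ω, X ω ^ 2 ∂μ := by
      rw [integral_add (by fun_prop) (by fun_prop), integral_add (by fun_prop) (by fun_prop),
        integral_const_mul, integral_const_mul, hmean]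
      simp
    _ ≤ exp (t ^ 2 * ∫ ω, X ω ^ 2 ∂μ) := by
      rw [add_comm]
      exact add_one_le_exp _

theorem abs_arg_one_sub_le_pi_div_two {z : ℂ} (hz : ‖z‖ ≤ 1) : |(1 - z).arg| ≤ π / 2 := by
  rw [Complex.abs_arg_le_pi_div_two_iff, Complex.sub_re, Complex.one_re, sub_nonneg]
  exact (Complex.re_le_norm z).trans hz

theorem abs_arg_one_sub_le_mul_norm {z : ℂ} (hz : ‖z‖ ≤ 1) :
    |(1 - z).arg| ≤ π / 2 * ‖z‖ := by
  rcases eq_or_ne (1 - z) 0 with h | h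
  · rw [h, Complex.arg_zero, abs_zero]
    positivity
  have harg := abs_arg_one_sub_le_pi_div_two hz
  have him : |(1 - z).im| ≤ ‖z‖ * ‖1 - z‖ := by
    have := Complex.abs_im_le_norm (starRingEnd ℂ z * (1 - z))
    rw [norm_mul, Complex.norm_conj] at this
    convert this using 2
    simp only [Complex.sub_im, Complex.one_im, Complex.mul_im, Complex.conj_re, Complex.conj_im,
      Complex.sub_re, Complex.one_re]
    ring
  have hsin : sin |(1 - z).arg| ≤ ‖z‖ := by
    rw [← abs_sin_eq_sin_abs_of_abs_le_pi (Complex.abs_arg_le_pi _), Complex.sin_arg, abs_div,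
      abs_norm, div_le_iff₀ (norm_pos_iff.2 h)]
    exact him
  calc |(1 - z).arg|
    _ = π / 2 * (2 / π * |(1 - z).arg|) := by field_simp
    _ ≤ π / 2 * ‖z‖ := by gcongr; exact (mul_le_sin (abs_nonneg _) harg).trans hsin

theorem sum_norm_sq_apply_of_mem_unitaryGroup {U : Matrix m m ℂ} (hU : U ∈ unitaryGroup m ℂ)
    (j : m) : ∑ i, ‖U i j‖ ^ 2 = 1 := by
  have := congrFun₂ (mem_unitaryGroup_iff'.1 hU) j j
  simp only [Matrix.mul_apply, star_apply, Complex.star_def, Complex.conj_mul', one_apply_eq]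
    at this
  exact_mod_cast this

variable [MeasurableSpace (unitaryGroup m ℂ)] [BorelSpace (unitaryGroup m ℂ)]

theorem measurable_arg_one_sub_apply (i j : m) :
    Measurable fun U : unitaryGroup m ℂ => (1 - U.1 i j).arg :=
  Complex.measurable_arg.comp
    (continuous_const.sub (continuous_subtype_val.matrix_elem i j)).measurable

theorem integrable_norm_sq_apply (μ : Measure (unitaryGroup m ℂ)) [IsFiniteMeasure μ]
    (i j : m) : Integrable (fun U : unitaryGroup m ℂ => ‖U.1 i j‖ ^ 2) μ :=
  .of_bound ((continuous_subtype_val.matrix_elem i j).norm.pow 2).aestronglyMeasurable 1 <|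
    ae_of_all _ fun U => by simpa using entry_norm_bound_of_unitary U.2 i j

theorem integral_norm_sq_apply (μ : Measure (unitaryGroup m ℂ)) [IsProbabilityMeasure μ]
    [μ.IsMulLeftInvariant] (i j : m) :
    ∫ U : unitaryGroup m ℂ, ‖U.1 i j‖ ^ 2 ∂μ = (Fintype.card m : ℝ)⁻¹ := by
  have hrow (k : m) : ∫ U : unitaryGroup m ℂ, ‖U.1 k j‖ ^ 2 ∂μ
      = ∫ U : unitaryGroup m ℂ, ‖U.1 i j‖ ^ 2 ∂μ := by
    let P : unitaryGroup m ℂ := ⟨swap ℂ i k, by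
      rw [mem_unitaryGroup_iff, star_eq_conjTranspose, conjTranspose_swap, swap_mul_self]⟩
    rw [← integral_mul_left_eq_self (fun U : unitaryGroup m ℂ => ‖U.1 i j‖ ^ 2) P]
    simp [P]
  have hsum := integral_finsetSum Finset.univ fun k _ => integrable_norm_sq_apply μ k j
  simp only [fun U : unitaryGroup m ℂ => sum_norm_sq_apply_of_mem_unitaryGroup U.2 j, hrow,
    integral_const, probReal_univ, one_smul, Finset.sum_const, nsmul_eq_mul] at hsum
  exact eq_inv_of_mul_eq_one_right hsum.symm

theorem integral_arg_one_sub_apply_eq_zero (μ : Measure (unitaryGroup m ℂ))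
    [IsProbabilityMeasure μ] [μ.IsHaarMeasure] (i j : m) :
    ∫ U : unitaryGroup m ℂ, (1 - U.1 i j).arg ∂μ = 0 := by
  have hpres : MeasurePreserving (Unitary.mapEquiv (mapConj m)) μ μ :=
    measurePreserving_unitaryMapEquiv (f := mapConj m) (continuous_id.matrix_map continuous_star)
  have hconj (U : unitaryGroup m ℂ) :
      (1 - (Unitary.mapEquiv (mapConj m) U).1 i j).arg = -(1 - U.1 i j).arg := by
    have hne : (1 - U.1 i j).arg ≠ π := fun h => by
      have := abs_arg_one_sub_le_pi_div_two (entry_norm_bound_of_unitary U.2 i j)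
      rw [h, abs_of_pos pi_pos] at this
      linarith [pi_pos]
    have := Complex.arg_conj (1 - U.1 i j)
    rwa [if_neg hne, map_sub, map_one] at this
  have hint := integral_map hpres.aemeasurable
    (measurable_arg_one_sub_apply i j).aestronglyMeasurable
  rw [hpres.map_eq] at hint
  simp only [hconj, integral_neg] at hint
  linarith

theorem mgf_arg_one_sub_apply_le (μ : Measure (unitaryGroup m ℂ)) [IsProbabilityMeasure μ]
    [μ.IsHaarMeasure] (i j : m) {t : ℝ} (ht : |t| ≤ 2 / π) :
    mgf (fun U : unitaryGroup m ℂ => (1 - U.1 i j).arg) μ t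
      ≤ exp ((π / 2 * t) ^ 2 * (Fintype.card m : ℝ)⁻¹) := by
  have hle (U : unitaryGroup m ℂ) : |(1 - U.1 i j).arg| ≤ π / 2 * ‖U.1 i j‖ :=
    abs_arg_one_sub_le_mul_norm (entry_norm_bound_of_unitary U.2 i j)
  have hbound (U : unitaryGroup m ℂ) : |(1 - U.1 i j).arg| ≤ π / 2 :=
    abs_arg_one_sub_le_pi_div_two (entry_norm_bound_of_unitary U.2 i j)
  have hsq : ∫ U : unitaryGroup m ℂ, (1 - U.1 i j).arg ^ 2 ∂μ
      ≤ (π / 2) ^ 2 * (Fintype.card m : ℝ)⁻¹ := by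
    rw [← integral_norm_sq_apply μ i j, ← integral_const_mul]
    refine integral_mono_of_nonneg (ae_of_all _ fun _ => sq_nonneg _)
      ((integrable_norm_sq_apply μ i j).const_mul _) (ae_of_all _ fun U => ?_)
    simpa only [sq_abs, mul_pow] using pow_le_pow_left₀ (abs_nonneg _) (hle U) 2
  refine (mgf_le_exp_of_abs_mul_le_one (measurable_arg_one_sub_apply i j).aemeasurable
    (ae_of_all _ hbound) (integral_arg_one_sub_apply_eq_zero μ i j) ?_).trans (exp_le_exp.2 ?_)
  · rwa [← le_div_iff₀ (by positivity), one_div_div]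
  · rw [mul_comm (π / 2), mul_pow, mul_assoc]
    exact mul_le_mul_of_nonneg_left hsq (sq_nonneg t)

end Entries

section Induction

open ProbabilityTheory

theorem exists_isHaarMeasure_isProbabilityMeasure (G : Type*) [TopologicalSpace G] [Group G]
    [IsTopologicalGroup G] [CompactSpace G] [MeasurableSpace G] [BorelSpace G] :
    ∃ μ : Measure G, μ.IsHaarMeasure ∧ IsProbabilityMeasure μ :=
  ⟨Measure.haarMeasure ⊤, inferInstance, ⟨Measure.haarMeasure_self⟩⟩

theorem mgf_argDetOneSub_reindex
    [MeasurableSpace (unitaryGroup m ℂ)] [BorelSpace (unitaryGroup m ℂ)]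
    [MeasurableSpace (unitaryGroup l ℂ)] [BorelSpace (unitaryGroup l ℂ)] (e : m ≃ l)
    (μ : Measure (unitaryGroup m ℂ)) (ν : Measure (unitaryGroup l ℂ)) [IsProbabilityMeasure μ]
    [IsProbabilityMeasure ν] [μ.IsHaarMeasure] [ν.IsHaarMeasure] (t : ℝ) :
    mgf (fun U : unitaryGroup m ℂ => argDetOneSub U.1) μ t
      = mgf (fun V : unitaryGroup l ℂ => argDetOneSub V.1) ν t := by
  have hpres : MeasurePreserving (Unitary.mapEquiv (reindexStarMulEquiv e)) μ ν :=
    measurePreserving_unitaryMapEquiv (f := reindexStarMulEquiv e)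
      (continuous_id.matrix_reindex e e)
  rw [← hpres.map_eq, mgf_map hpres.aemeasurable
    (hpres.map_eq ▸ (integrable_exp_mul_argDetOneSub ν t).aestronglyMeasurable)]
  refine congrArg (mgf · μ t) (funext fun U => congrArg Complex.im ?_)
  exact (logDetOneSub_reindex e U.1).symm

theorem mgf_argDetOneSub_sum_unique_le [Unique l]
    [MeasurableSpace (unitaryGroup m ℂ)] [BorelSpace (unitaryGroup m ℂ)]
    [MeasurableSpace (unitaryGroup (m ⊕ l) ℂ)] [BorelSpace (unitaryGroup (m ⊕ l) ℂ)]
    (μ : Measure (unitaryGroup (m ⊕ l) ℂ)) [IsProbabilityMeasure μ] [μ.IsHaarMeasure]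
    (ν : Measure (unitaryGroup m ℂ)) [IsProbabilityMeasure ν] [ν.IsMulLeftInvariant] {t : ℝ}
    (ht : |t| ≤ 2 / π) :
    mgf (fun U : unitaryGroup (m ⊕ l) ℂ => argDetOneSub U.1) μ t
      ≤ exp ((π / 2 * t) ^ 2 * (Fintype.card m + 1 : ℝ)⁻¹)
        * mgf (fun V : unitaryGroup m ℂ => argDetOneSub V.1) ν t := by
  rw [mgf_argDetOneSub_eq_mul μ ν]
  refine mul_le_mul_of_nonneg_right ?_ mgf_nonneg
  simp only [argDetOneSub, logDetOneSub_of_unique, Complex.log_im]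
  simpa [toBlocks₂₂] using mgf_arg_one_sub_apply_le μ (Sum.inr default) (Sum.inr default) ht

theorem mgf_argDetOneSub_le {N : ℕ} (μ : Measure (unitaryGroup (Fin N) ℂ))
    [IsProbabilityMeasure μ] [μ.IsHaarMeasure] {t : ℝ} (ht : |t| ≤ 2 / π) :
    mgf (fun U : unitaryGroup (Fin N) ℂ => argDetOneSub U.1) μ t
      ≤ exp ((π / 2 * t) ^ 2 * harmonic N) := by
  induction N with
  | zero => simp [argDetOneSub, logDetOneSub_of_isEmpty, mgf]
  | succ n ih =>
    borelize ↥(unitaryGroup (Fin n ⊕ Fin 1) ℂ)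
    obtain ⟨μ', _, _⟩ :=
      exists_isHaarMeasure_isProbabilityMeasure (unitaryGroup (Fin n ⊕ Fin 1) ℂ)
    obtain ⟨ν, _, _⟩ := exists_isHaarMeasure_isProbabilityMeasure (unitaryGroup (Fin n) ℂ)
    calc mgf (fun U : unitaryGroup (Fin (n + 1)) ℂ => argDetOneSub U.1) μ t
      _ = mgf (fun U : unitaryGroup (Fin n ⊕ Fin 1) ℂ => argDetOneSub U.1) μ' t :=
        (mgf_argDetOneSub_reindex finSumFinEquiv μ' μ t).symm
      _ ≤ exp ((π / 2 * t) ^ 2 * (n + 1 : ℝ)⁻¹) * exp ((π / 2 * t) ^ 2 * harmonic n) := by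
        refine (mgf_argDetOneSub_sum_unique_le μ' ν ht).trans ?_
        rw [Fintype.card_fin]
        gcongr
        exact ih ν
      _ = exp ((π / 2 * t) ^ 2 * harmonic (n + 1)) := by
        rw [← exp_add, harmonic_succ]
        push_cast
        ring_nf

end Induction

noncomputable section Counting

theorem arg_one_sub_exp {x : ℝ} (hx₀ : 0 < x) (hx : x < 2 * π) :
    (1 - Circle.exp x : ℂ).arg = (x - π) / 2 := by
  have hcos : cos ((x - π) / 2) = sin (x / 2) := by
    rw [sub_div, cos_sub_pi_div_two]
  have hsin : sin ((x - π) / 2) = -cos (x / 2) := by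
    rw [sub_div, sin_sub_pi_div_two]
  have hpolar : (1 - Circle.exp x : ℂ) = (2 * sin (x / 2) : ℝ) *
      (Complex.cos ((x - π) / 2 : ℝ) + Complex.sin ((x - π) / 2 : ℝ) * Complex.I) := by
    rw [Circle.coe_exp, Complex.exp_mul_I, ← Complex.ofReal_cos, ← Complex.ofReal_sin,
      ← Complex.ofReal_cos, ← Complex.ofReal_sin, hcos, hsin]
    have hx₂ : x = 2 * (x / 2) := by ring
    nth_rw 1 2 [hx₂]
    rw [cos_two_mul', sin_two_mul]
    push_cast
    linear_combination -Complex.sin_sq_add_cos_sq (x / 2 : ℂ)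
  rw [hpolar, Complex.arg_mul_cos_add_sin_mul_I]
  · exact mul_pos two_pos (sin_pos_of_pos_of_lt_pi (by linarith) (by linarith))
  · constructor <;> linarith

theorem arg_one_sub_exp_sub_arg_one_sub_exp {a θ : ℝ} (ha : a ∈ Set.Ico 0 (2 * π))
    (hθ₀ : 0 < θ) (hθ : θ ≤ 2 * π) (hne : (1 - Circle.exp a : ℂ) ≠ 0)
    (hne' : (1 - Circle.exp (a - θ) : ℂ) ≠ 0) :
    (1 - Circle.exp (a - θ) : ℂ).arg - (1 - Circle.exp a : ℂ).arg
      = -θ / 2 + if a ∈ Set.Icc 0 θ then π else 0 := by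
  have ha₀ : 0 < a := ha.1.lt_of_ne (by rintro rfl; simp at hne)
  have haθ : a ≠ θ := by rintro rfl; simp at hne'
  rw [arg_one_sub_exp ha₀ ha.2]
  rcases haθ.lt_or_gt with hlt | hgt
  · rw [if_pos ⟨ha.1, hlt.le⟩, ← Circle.exp_add_two_pi,
      arg_one_sub_exp (by linarith) (by linarith)]
    ring
  · rw [if_neg fun h => h.2.not_gt hgt, arg_one_sub_exp (by linarith) (by linarith [ha.2])]
    ring

variable {N : ℕ}

theorem mem_Ico_of_mem_eigenAngles {U : unitaryGroup (Fin N) ℂ} {a : ℝ}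
    (ha : a ∈ eigenAngles N U) : a ∈ Set.Ico 0 (2 * π) := by
  obtain ⟨z, -, rfl⟩ := Multiset.mem_map.1 ha
  have := Complex.neg_pi_lt_arg z
  have := Complex.arg_le_pi z
  have := pi_pos
  split_ifs <;> constructor <;> linarith

theorem card_eigenAngles (U : unitaryGroup (Fin N) ℂ) : (eigenAngles N U).card = N := by
  rw [eigenAngles, Multiset.card_map, card_roots_charpoly, Fintype.card_fin]

theorem map_exp_eigenAngles (U : unitaryGroup (Fin N) ℂ) :
    (eigenAngles N U).map (fun a => (Circle.exp a : ℂ)) = U.1.charpoly.roots := by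
  rw [eigenAngles, Multiset.map_map]
  refine (Multiset.map_congr rfl fun z hz => ?_).trans (Multiset.map_id _)
  have hnorm : ‖z‖ = 1 := spectrum.norm_eq_one_of_unitary U.2 <|
    mem_spectrum_iff_isRoot_charpoly.2 (Polynomial.isRoot_of_mem_roots hz)
  have hexp : (Circle.exp z.arg : ℂ) = z := by
    simpa [hnorm] using Complex.norm_mul_exp_arg_mul_I z
  simp only [Function.comp_apply]
  split_ifs
  · exact hexp
  · rw [Circle.exp_add_two_pi, hexp, id]

theorem sum_map_ite_eq_mul_card_filter {α R : Type*} [NonAssocSemiring R] (p : α → Prop)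
    [DecidablePred p] (c : R) (s : Multiset α) :
    (s.map fun a => if p a then c else 0).sum = c * (s.filter p).card := by
  induction s using Multiset.induction_on with
  | empty => simp
  | cons a s ih => by_cases h : p a <;> simp [h, ih, mul_add, add_comm]

theorem argDetOneSub_exp_smul (U : unitaryGroup (Fin N) ℂ) (θ : ℝ) :
    argDetOneSub ((Circle.exp (-θ) : ℂ) • U.1)
      = ((eigenAngles N U).map fun a => (1 - Circle.exp (a - θ) : ℂ).arg).sum := by
  rw [argDetOneSub_smul, ← map_exp_eigenAngles, Multiset.map_map]
  simp only [Function.comp_def, ← Circle.coe_mul, ← Circle.exp_add, neg_add_eq_sub]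

theorem one_sub_exp_sub_ne_zero {U : unitaryGroup (Fin N) ℂ} {a θ : ℝ}
    (hdet : (1 - (Circle.exp (-θ) : ℂ) • U.1).det ≠ 0) (ha : a ∈ eigenAngles N U) :
    (1 - Circle.exp (a - θ) : ℂ) ≠ 0 := by
  rw [det_one_sub_ne_zero_iff, roots_charpoly_smul, ← map_exp_eigenAngles] at hdet
  rw [sub_eq_neg_add a, Circle.exp_add, Circle.coe_mul]
  exact hdet _ (Multiset.mem_map_of_mem _ (Multiset.mem_map_of_mem _ ha))

theorem argDetOneSub_exp_smul_sub_argDetOneSub {U : unitaryGroup (Fin N) ℂ} {θ : ℝ}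
    (hθ₀ : 0 < θ) (hθ : θ ≤ 2 * π) (hdet : (1 - U.1).det ≠ 0)
    (hdet' : (1 - (Circle.exp (-θ) : ℂ) • U.1).det ≠ 0) :
    argDetOneSub ((Circle.exp (-θ) : ℂ) • U.1) - argDetOneSub U.1
      = π * (countFun N U θ - N * θ / (2 * π)) := by
  classical
  have hU : (Circle.exp (-0) : ℂ) • U.1 = U.1 := by simp
  rw [← hU] at hdet
  calc argDetOneSub ((Circle.exp (-θ) : ℂ) • U.1) - argDetOneSub U.1
    _ = ((eigenAngles N U).map fun a => -θ / 2 + if a ∈ Set.Icc 0 θ then π else 0).sum := by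
      nth_rw 2 [← hU]
      rw [argDetOneSub_exp_smul, argDetOneSub_exp_smul, ← Multiset.sum_map_sub]
      refine congrArg _ (Multiset.map_congr rfl fun a ha => ?_)
      have hne := one_sub_exp_sub_ne_zero hdet ha
      rw [sub_zero] at hne ⊢
      exact arg_one_sub_exp_sub_arg_one_sub_exp (mem_Ico_of_mem_eigenAngles ha) hθ₀ hθ hne
        (one_sub_exp_sub_ne_zero hdet' ha)
    _ = N * (-θ / 2) + π * countFun N U θ := by
      rw [Multiset.sum_map_add, sum_map_ite_eq_mul_card_filter, Multiset.map_const',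
        Multiset.sum_replicate, card_eigenAngles, nsmul_eq_mul, countFun, countAngles]
      congr!
    _ = _ := by field_simp; ring

end Counting

section Maximal

open ProbabilityTheory

variable {Ω ι : Type*} {mΩ : MeasurableSpace Ω} {μ : Measure Ω} [Fintype ι] {X : ι → Ω → ℝ}

theorem exp_integral_le_of_exp_le [IsProbabilityMeasure μ] {f g : Ω → ℝ}
    (hf : AEStronglyMeasurable f μ) (hf₀ : 0 ≤ᵐ[μ] f) (hg : Integrable g μ)
    (hfg : ∀ᵐ ω ∂μ, exp (f ω) ≤ g ω) : exp (∫ ω, f ω ∂μ) ≤ ∫ ω, g ω ∂μ := by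
  have hexp : Integrable (fun ω => exp (f ω)) μ :=
    hg.mono' (continuous_exp.comp_aestronglyMeasurable hf) <| hfg.mono fun ω hω => by
      rwa [norm_of_nonneg (exp_pos _).le]
  have hint : Integrable f μ := hexp.mono' hf <| hf₀.mono fun ω hω => by
    rw [norm_of_nonneg hω]
    linarith [add_one_le_exp (f ω)]
  exact (convexOn_exp.map_integral_le continuous_exp.continuousOn isClosed_univ
    (ae_of_all _ fun _ => Set.mem_univ _) hint hexp).trans (integral_mono_ae hexp hg hfg)

theorem exp_half_mul_iSup_abs_sub_le {t : ℝ} (ht : 0 ≤ t) (x : ι → ℝ) (j : ι) :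
    exp (t / 2 * ⨆ i, |x i - x j|) ≤ ∑ i, (exp (t * x i) + exp (-t * x i)) := by
  have : Nonempty ι := ⟨j⟩
  have hle (i : ι) : exp (t * |x i|) ≤ ∑ i, (exp (t * x i) + exp (-t * x i)) := by
    refine le_trans ?_ (Finset.single_le_sum (fun i _ => by positivity) (Finset.mem_univ i))
    simpa [abs_mul, abs_of_nonneg ht] using exp_abs_le (t * x i)
  obtain ⟨i, hi⟩ := exists_eq_ciSup_of_finite (f := fun i => |x i - x j|)
  have hsub := abs_sub (x i) (x j)
  rw [← hi]
  rcases le_total |x i| |x j| with h | h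
  · exact (exp_le_exp.2 (by nlinarith)).trans (hle j)
  · exact (exp_le_exp.2 (by nlinarith)).trans (hle i)

theorem exp_half_mul_integral_iSup_abs_sub_le [IsProbabilityMeasure μ] {t : ℝ} (ht : 0 ≤ t)
    (hX : ∀ i, AEMeasurable (X i) μ) (hpos : ∀ i, Integrable (fun ω => exp (t * X i ω)) μ)
    (hneg : ∀ i, Integrable (fun ω => exp (-t * X i ω)) μ) (j : ι) :
    exp (t / 2 * ∫ ω, ⨆ i, |X i ω - X j ω| ∂μ) ≤ ∑ i, (mgf (X i) μ t + mgf (X i) μ (-t)) := by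
  have hsup : AEMeasurable (fun ω => ⨆ i, |X i ω - X j ω|) μ :=
    AEMeasurable.iSup fun i => measurable_norm.comp_aemeasurable ((hX i).sub (hX j))
  have hint (i : ι) : Integrable (fun ω => exp (t * X i ω) + exp (-t * X i ω)) μ :=
    (hpos i).add (hneg i)
  calc exp (t / 2 * ∫ ω, ⨆ i, |X i ω - X j ω| ∂μ)
    _ ≤ ∫ ω, ∑ i, (exp (t * X i ω) + exp (-t * X i ω)) ∂μ := by
      rw [← integral_const_mul]
      exact exp_integral_le_of_exp_le (hsup.const_mul _).aestronglyMeasurable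
        (ae_of_all _ fun ω => mul_nonneg (by positivity) (Real.iSup_nonneg fun i => abs_nonneg _))
        (integrable_finsetSum _ fun i _ => hint i)
        (ae_of_all _ fun ω => exp_half_mul_iSup_abs_sub_le ht (X · ω) j)
    _ = ∑ i, (mgf (X i) μ t + mgf (X i) μ (-t)) := by
      rw [integral_finsetSum _ fun i _ => hint i]
      exact Finset.sum_congr rfl fun i _ => integral_add (hpos i) (hneg i)

end Maximal

noncomputable section Deviation

open ProbabilityTheory

section Rotation

variable [MeasurableSpace (unitaryGroup m ℂ)] [BorelSpace (unitaryGroup m ℂ)]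
  (μ : Measure (unitaryGroup m ℂ)) [μ.IsMulLeftInvariant]

theorem ae_det_one_sub_smul_ne_zero [SFinite μ] (z : Circle) :
    ∀ᵐ U : unitaryGroup m ℂ ∂μ, (1 - (z : ℂ) • U.1).det ≠ 0 := by
  simpa only [coe_scalarUnitary_mul] using
    (measurePreserving_mul_left μ (scalarUnitary m z)).quasiMeasurePreserving.ae
      (ae_det_one_sub_ne_zero μ)

theorem identDistrib_argDetOneSub_smul [SFinite μ] (z : Circle) :
    IdentDistrib (fun U : unitaryGroup m ℂ => argDetOneSub ((z : ℂ) • U.1))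
      (fun U => argDetOneSub U.1) μ μ := by
  have hpres := measurePreserving_mul_left μ (scalarUnitary m z)
  have hid : IdentDistrib (scalarUnitary m z * ·) id μ μ :=
    ⟨hpres.aemeasurable, aemeasurable_id, by rw [hpres.map_eq, Measure.map_id]⟩
  simpa only [Function.comp_def, coe_scalarUnitary_mul, id] using hid.comp_of_aemeasurable
    (u := fun U : unitaryGroup m ℂ => argDetOneSub U.1)
    (by rw [hpres.map_eq]; exact aemeasurable_argDetOneSub μ)

end Rotation

/-- The rotation carrying the angle `2πk/N` to `0`. -/
def gridRotation (N k : ℕ) : Circle :=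
  Circle.exp (-(2 * π * k / N))

theorem gridRotation_self (N : ℕ) : gridRotation N N = 1 := by
  rcases eq_or_ne N 0 with rfl | hN
  · simp [gridRotation]
  · rw [gridRotation, mul_div_cancel_right₀ _ (Nat.cast_ne_zero.2 hN), Circle.exp_neg,
      Circle.exp_two_pi, inv_one]

variable {N : ℕ} (μ : Measure (unitaryGroup (Fin N) ℂ)) [IsProbabilityMeasure μ]

theorem pi_mul_maxDev_ae_eq [μ.IsMulLeftInvariant] :
    (fun U => π * maxDev N U) =ᵐ[μ] fun U => ⨆ k : Finset.Icc 1 N,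
      |argDetOneSub ((gridRotation N k : ℂ) • U.1)
        - argDetOneSub ((gridRotation N N : ℂ) • U.1)| := by
  filter_upwards [ae_det_one_sub_ne_zero μ,
    ae_all_iff.2 fun k => ae_det_one_sub_smul_ne_zero μ (gridRotation N k)] with U hdet hdet'
  rw [maxDev, Real.mul_iSup_of_nonneg pi_pos.le]
  refine iSup_congr fun ⟨k, hk⟩ => ?_
  obtain ⟨hk₁, hkN⟩ := Finset.mem_Icc.1 hk
  have hN₀ : (0 : ℝ) < N := by exact_mod_cast hk₁.trans hkN
  have : (0 : ℝ) < k := by exact_mod_cast hk₁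
  have hle : 2 * π * k / N ≤ 2 * π := by
    rw [div_le_iff₀ hN₀]
    gcongr
  rw [gridRotation_self, Circle.coe_one, one_smul, gridRotation,
    argDetOneSub_exp_smul_sub_argDetOneSub (by positivity) hle hdet (hdet' k), abs_mul,
    abs_of_pos pi_pos]
  congr 3
  field_simp

theorem exp_mul_integral_maxDev_le [μ.IsHaarMeasure] (hN : 1 ≤ N) :
    exp (π / 4 * ∫ U, maxDev N U ∂μ) ≤ 2 * N * exp ((π / 4) ^ 2 * harmonic N) := by
  let X (k : Finset.Icc 1 N) (U : unitaryGroup (Fin N) ℂ) : ℝ :=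
    argDetOneSub ((gridRotation N k : ℂ) • U.1)
  have hX (k : Finset.Icc 1 N) : IdentDistrib (X k) (fun U => argDetOneSub U.1) μ μ :=
    identDistrib_argDetOneSub_smul μ (gridRotation N k)
  have hint (k : Finset.Icc 1 N) (t : ℝ) : Integrable (fun U => exp (t * X k U)) μ :=
    ((hX k).comp (u := fun x => exp (t * x)) (by fun_prop)).integrable_iff.2
      (integrable_exp_mul_argDetOneSub μ t)
  have hmgf (k : Finset.Icc 1 N) {t : ℝ} (ht : |t| = 1 / 2) :
      mgf (X k) μ t ≤ exp ((π / 4) ^ 2 * harmonic N) := by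
    have hpi : |t| ≤ 2 / π := by
      rw [ht, div_le_div_iff₀ two_pos pi_pos]
      linarith [pi_le_four]
    have hsq : (π / 2 * t) ^ 2 = (π / 4) ^ 2 := by
      rw [mul_pow, ← sq_abs t, ht]
      ring
    rw [mgf_congr_identDistrib (hX k), ← hsq]
    exact mgf_argDetOneSub_le μ hpi
  calc exp (π / 4 * ∫ U, maxDev N U ∂μ)
    _ = exp (1 / 2 / 2 * ∫ U, ⨆ k, |X k U - X ⟨N, Finset.mem_Icc.2 ⟨hN, le_rfl⟩⟩ U| ∂μ) := by
      rw [← integral_congr_ae (pi_mul_maxDev_ae_eq μ), integral_const_mul]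
      ring_nf
    _ ≤ ∑ k, (mgf (X k) μ (1 / 2) + mgf (X k) μ (-(1 / 2))) :=
      exp_half_mul_integral_iSup_abs_sub_le (by norm_num) (fun k => (hX k).aemeasurable_fst)
        (fun k => hint k _) (fun k => hint k _) _
    _ ≤ ∑ _k : Finset.Icc 1 N, 2 * exp ((π / 4) ^ 2 * harmonic N) := by
      gcongr with k
      rw [two_mul]
      exact add_le_add (hmgf k (by norm_num)) (hmgf k (by norm_num [abs_of_pos]))
    _ = 2 * N * exp ((π / 4) ^ 2 * harmonic N) := by
      simp
      ring

end Deviation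

/-- For a Haar-distributed `N × N` unitary matrix,
`𝔼[max_{1 ≤ k ≤ N} |𝒩_{2πk/N} − k|] ≤ 4 log(eN) + 2/e²`. -/
theorem expected_max_deviation_bound
    (N : ℕ) (hN : 1 ≤ N) (ℙ : Measure (Matrix.unitaryGroup (Fin N) ℂ))
    (hprob : IsProbabilityMeasure ℙ) (hhaar : ℙ.IsHaarMeasure) :
    ∫ U, maxDev N U ∂ℙ ≤ 4 * Real.log (Real.exp 1 * N) + 2 / Real.exp 1 ^ 2 := by
  have hN₀ : (N : ℝ) ≠ 0 := Nat.cast_ne_zero.2 (by lia)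
  have hlogN : 0 ≤ log N := log_natCast_nonneg N
  have hE₀ : 0 ≤ ∫ U, maxDev N U ∂ℙ :=
    integral_nonneg fun U => Real.iSup_nonneg fun k => abs_nonneg _
  have hE : π / 4 * ∫ U, maxDev N U ∂ℙ ≤ log 2 + log N + (π / 4) ^ 2 * harmonic N := by
    rw [← log_mul two_ne_zero hN₀, ← log_exp ((π / 4) ^ 2 * harmonic N),
      ← log_mul (by positivity) (exp_ne_zero _), le_log_iff_exp_le (by positivity)]
    exact exp_mul_integral_maxDev_le ℙ hN
  have hpi : (π / 4) ^ 2 ≤ 1 := pow_le_one₀ (by positivity) (by linarith [pi_le_four])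
  have hbound : 3 / 4 * ∫ U, maxDev N U ∂ℙ ≤ 3 * log (exp 1 * N) := calc
    _ ≤ π / 4 * ∫ U, maxDev N U ∂ℙ := by gcongr; exact pi_gt_three.le
    _ ≤ log 2 + log N + (π / 4) ^ 2 * (1 + log N) :=
      hE.trans (by gcongr; exact harmonic_le_one_add_log N)
    _ ≤ 3 * log (exp 1 * N) := by
      rw [log_mul (exp_ne_zero _) hN₀, log_exp]
      linarith [log_two_lt_d9, mul_le_of_le_one_left (by linarith : 0 ≤ 1 + log N) hpi]
  have : 0 < 2 / exp 1 ^ 2 := by positivity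
  linarith
end
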